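/- arXiv:0904.0535 — 2 statements merged into one kernel-verified Lean document; each statement's English description precedes it below -/
import Mathlib

section
/- Let L be a (1,1)-tensor field on a smooth manifold M with vanishing Nijenhuis torsion, N_L = 0. Then for every polynomial p with constant real coefficients, the Nijenhuis torsion of p(L) vanishes: N_{p(L)} = 0. Consequently, N_{f(L)} = 0 for every function f such that K, f, L satisfy the admissibility assumptions. -/
open Matrix Polynomial Filter

noncomputable section

variable {ι : Type} [Fintype ι] [DecidableEq ι]

/-- Partial derivative of a real-valued function on `ι → ℝ` in the direction of the
`j`-th coordinate vector. -/
def pd (j : ι) (F : (ι → ℝ) → ℝ) (x : ι → ℝ) : ℝ :=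
  fderiv ℝ F x (Pi.single j 1)

/-- Christoffel symbols `Γ^i_{jk}` of a metric given in local coordinates as a
matrix-valued function. -/
def christoffel (g : (ι → ℝ) → Matrix ι ι ℝ) (x : ι → ℝ) (i j k : ι) : ℝ :=
  (1 / 2) * ∑ m, (g x)⁻¹ i m *
    (pd j (fun y => g y m k) x + pd k (fun y => g y m j) x - pd m (fun y => g y j k) x)

/-- A curve is a geodesic of `g` up to reparametrisation (an unparametrized geodesic):
`γ̈ + Γ(γ̇,γ̇) = α(t)·γ̇` for some function `α`. -/
def IsPregeodesic (g : (ι → ℝ) → Matrix ι ι ℝ) (γ : ℝ → ι → ℝ) : Prop :=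
  ∃ α : ℝ → ℝ, ∀ t : ℝ, ∀ i : ι,
    deriv (fun s => deriv (fun τ => γ τ i) s) t
      + ∑ j, ∑ k, christoffel g (γ t) i j k *
          deriv (fun τ => γ τ j) t * deriv (fun τ => γ τ k) t
      = α t * deriv (fun τ => γ τ i) t

/-- `g` is a pseudo-Riemannian metric (in local coordinates) on the set `U`. -/
structure IsMetricOn (g : (ι → ℝ) → Matrix ι ι ℝ) (U : Set (ι → ℝ)) : Prop where
  smooth : ∀ i j, ContDiffOn ℝ (⊤ : ℕ∞) (fun x => g x i j) U
  symm : ∀ x ∈ U, (g x)ᵀ = g x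
  nondeg : ∀ x ∈ U, IsUnit (g x).det

/-- Two metrics are geodesically equivalent on `U`: they have the same geodesics
considered as unparametrized curves. -/
def GeodEquiv (g gb : (ι → ℝ) → Matrix ι ι ℝ) (U : Set (ι → ℝ)) : Prop :=
  ∀ γ : ℝ → ι → ℝ, ContDiff ℝ (⊤ : ℕ∞) γ → (∀ t, γ t ∈ U) →
    (IsPregeodesic g γ ↔ IsPregeodesic gb γ)

/-- The (1,1)-tensor `L(g,ḡ)^i_j = (det ḡ / det g)^{1/(n+1)} ḡ^{ik} g_{kj}`. -/
def Lten (g gb : (ι → ℝ) → Matrix ι ι ℝ) (x : ι → ℝ) : Matrix ι ι ℝ :=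
  (((gb x).det / (g x).det) ^ ((1 : ℝ) / (Fintype.card ι + 1))) • ((gb x)⁻¹ * g x)

/-- An admissible factorisation `χ = χ₁·χ₂` of the characteristic polynomial of `L`:
both factors are monic of degree ≥ 1, have smooth coefficients, and have no common
complex root at any point of `U`. -/
structure AdmissibleFact (L : (ι → ℝ) → Matrix ι ι ℝ) (U : Set (ι → ℝ))
    (chi1 chi2 : (ι → ℝ) → Polynomial ℝ) : Prop where
  factor : ∀ x ∈ U, (L x).charpoly = chi1 x * chi2 x
  monic1 : ∀ x ∈ U, (chi1 x).Monic
  monic2 : ∀ x ∈ U, (chi2 x).Monic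
  deg1 : ∀ x ∈ U, 1 ≤ (chi1 x).natDegree
  deg2 : ∀ x ∈ U, 1 ≤ (chi2 x).natDegree
  smooth1 : ∀ k, ContDiffOn ℝ (⊤ : ℕ∞) (fun x => (chi1 x).coeff k) U
  smooth2 : ∀ k, ContDiffOn ℝ (⊤ : ℕ∞) (fun x => (chi2 x).coeff k) U
  coprime : ∀ x ∈ U, ¬ ∃ z : ℂ, aeval z (chi1 x) = 0 ∧ aeval z (chi2 x) = 0

/-- The distribution `D = ker χ(L)`. -/
def Dker (L : (ι → ℝ) → Matrix ι ι ℝ) (chi : (ι → ℝ) → Polynomial ℝ) (x : ι → ℝ) :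
    Submodule ℝ (ι → ℝ) :=
  LinearMap.ker (Matrix.mulVecLin (aeval (L x) (chi x)))

/-- A distribution on `U` is integrable (involutive, which is equivalent by the
Frobenius theorem): the Lie bracket of any two smooth vector fields tangent to the
distribution is again tangent to it. -/
def IsIntegrableDist (U : Set (ι → ℝ)) (D : (ι → ℝ) → Submodule ℝ (ι → ℝ)) : Prop :=
  ∀ u v : (ι → ℝ) → ι → ℝ, ContDiffOn ℝ (⊤ : ℕ∞) u U → ContDiffOn ℝ (⊤ : ℕ∞) v U →
    (∀ x ∈ U, u x ∈ D x) → (∀ x ∈ U, v x ∈ D x) →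
    ∀ x ∈ U, (fderiv ℝ v x (u x) - fderiv ℝ u x (v x)) ∈ D x

/-- The assumptions (i)–(iv) of Section 1.3 on the compact set `K` and the function
`f : K → ℂ` (the condition on the spectrum of `L` is stated separately). -/
structure AdmissibleFun (K : Set ℂ) (f : ℂ → ℂ) : Prop where
  compact : IsCompact K
  conn : IsConnected Kᶜ
  cont : ContinuousOn f K
  holo : DifferentiableOn ℂ f (interior K)
  symmK : ∀ z ∈ K, (starRingEnd ℂ) z ∈ K
  symmf : ∀ z ∈ K, f ((starRingEnd ℂ) z) = (starRingEnd ℂ) (f z)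

/-- Assumption (v): the (complex) spectrum of `L(x)` lies in the interior of `K` for
every `x ∈ U`. -/
def SpectrumIn {ι : Type} [Fintype ι] [DecidableEq ι]
    (L : (ι → ℝ) → Matrix ι ι ℝ) (U : Set (ι → ℝ)) (K : Set ℂ) : Prop :=
  ∀ x ∈ U, spectrum ℂ ((L x).map (algebraMap ℝ ℂ)) ⊆ interior K

/-- `FL` represents the (1,1)-tensor `f(L)`: it is the limit of `pᵢ(L)` for a sequence
of real polynomials `pᵢ` converging to `f` uniformly on `K` (such a sequence exists by
Mergelyan's theorem, and the limit does not depend on its choice). -/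
def RepFunOfL {ι : Type} [Fintype ι] [DecidableEq ι]
    (L : (ι → ℝ) → Matrix ι ι ℝ) (U : Set (ι → ℝ)) (K : Set ℂ) (f : ℂ → ℂ)
    (FL : (ι → ℝ) → Matrix ι ι ℝ) : Prop :=
  ∃ p : ℕ → Polynomial ℝ,
    TendstoUniformlyOn (fun m z => aeval z (p m)) f atTop K ∧
    ∀ x ∈ U, ∀ i j, Tendsto (fun m => aeval (L x) (p m) i j) atTop (nhds (FL x i j))

/-- The Lie bracket of two vector fields on `ι → ℝ`. -/
def vbracket (u v : (ι → ℝ) → ι → ℝ) (x : ι → ℝ) : ι → ℝ :=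
  fderiv ℝ v x (u x) - fderiv ℝ u x (v x)

/-- The vector field `Lu : x ↦ L(x)(u(x))`. -/
def appT (L : (ι → ℝ) → Matrix ι ι ℝ) (u : (ι → ℝ) → ι → ℝ) : (ι → ℝ) → ι → ℝ :=
  fun x => (L x).mulVec (u x)

/-- The Nijenhuis torsion `N_L(u,v) = L²[u,v] − L[Lu,v] − L[u,Lv] + [Lu,Lv]`. -/
def nijenhuis (L : (ι → ℝ) → Matrix ι ι ℝ) (u v : (ι → ℝ) → ι → ℝ)
    (x : ι → ℝ) : ι → ℝ :=
  (L x).mulVec ((L x).mulVec (vbracket u v x))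
  - (L x).mulVec (vbracket (appT L u) v x)
  - (L x).mulVec (vbracket u (appT L v) x)
  + vbracket (appT L u) (appT L v) x

/-- `N_L = 0` on `U`, tested against all smooth vector fields. -/
def NijenhuisZero (L : (ι → ℝ) → Matrix ι ι ℝ) (U : Set (ι → ℝ)) : Prop :=
  ∀ u v : (ι → ℝ) → ι → ℝ, ContDiff ℝ (⊤ : ℕ∞) u → ContDiff ℝ (⊤ : ℕ∞) v →
    ∀ x ∈ U, nijenhuis L u v x = 0

/-!
The polarised torsion `T(L, M)` is, for commuting `L` and `M`, a derivation in each argument, so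
`T(L, L) = 0` forces `T(p(L), q(L)) = 0` for all polynomials `p` and `q`.

For `f(L) = lim pₘ(L)` the derivatives of `pₘ(L)` have to converge as well. At a point `x`, let `χ`
be the characteristic polynomial of `L(x)`. Since `χ(L)²` vanishes at `x` together with its first
derivative, `p(L)` has there the same derivative as `r(L)`, where `r` is the remainder of `p`
modulo `χ²`. The roots of `χ` stay in a compact part of `Int K` when `x` varies slightly, so the
coefficients of `r` are bounded by a constant times `sup_K |p|`. Hence the derivatives of `pₘ(L)`
are locally uniformly Cauchy, and `N_{f(L)}` is the limit of `N_{pₘ(L)} = 0`.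
-/

section PolynomialRemainder

theorem modByMonic_mul_eq {R : Type*} [CommRing R] {P Q : R[X]} (hP : P.Monic) (hQ : Q.Monic)
    (p : R[X]) : p %ₘ (P * Q) = p %ₘ P + P * (p /ₘ P %ₘ Q) := by
  nontriviality R
  refine (div_modByMonic_unique (p /ₘ P /ₘ Q) _ (hP.mul hQ) ⟨?_, ?_⟩).2
  · calc p %ₘ P + P * (p /ₘ P %ₘ Q) + P * Q * (p /ₘ P /ₘ Q)
        = p %ₘ P + P * (p /ₘ P %ₘ Q + Q * (p /ₘ P /ₘ Q)) := by ring
      _ = p := by rw [modByMonic_add_div, modByMonic_add_div]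
  · have hPQ : (P * Q).degree = P.degree + Q.degree := hQ.degree_mul
    have hQ0 : 0 ≤ Q.degree := zero_le_degree_iff.2 hQ.ne_zero
    have hfst : (p %ₘ P).degree < P.degree + Q.degree :=
      (degree_modByMonic_lt p hP).trans_le (le_add_of_nonneg_right hQ0)
    have hsnd : (P * (p /ₘ P %ₘ Q)).degree < P.degree + Q.degree := by
      rw [mul_comm, hP.degree_mul, add_comm]
      exact WithBot.add_lt_add_left (degree_ne_bot.2 hP.ne_zero) (degree_modByMonic_lt _ hQ)
    exact hPQ ▸ (degree_add_le _ _).trans_lt (max_lt hfst hsnd)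

theorem norm_coeff_X_sub_C_mul_le {R : Type*} [NormedRing R] {r : R[X]} {b : ℝ}
    (hr : ∀ j, ‖r.coeff j‖ ≤ b) (a : R) (i : ℕ) :
    ‖((X - C a) * r).coeff i‖ ≤ (1 + ‖a‖) * b := by
  have hX : ‖(X * r).coeff i‖ ≤ b := by
    cases i with
    | zero => simpa using (norm_nonneg _).trans (hr 0)
    | succ j => simpa using hr j
  have hC : ‖(C a * r).coeff i‖ ≤ ‖a‖ * b := by
    rw [coeff_C_mul]
    exact (norm_mul_le _ _).trans (mul_le_mul_of_nonneg_left (hr i) (norm_nonneg a))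
  calc ‖((X - C a) * r).coeff i‖ ≤ ‖(X * r).coeff i‖ + ‖(C a * r).coeff i‖ := by
        rw [sub_mul, coeff_sub]
        exact norm_sub_le _ _
    _ ≤ (1 + ‖a‖) * b := by linarith

theorem norm_eval_divByMonic_X_sub_C_le {K : Set ℂ} {δ : ℝ} (hδ : 0 < δ) {μ : ℂ}
    (hμ : Metric.closedBall μ δ ⊆ K) {p : ℂ[X]} {M : ℝ} (hp : ∀ z ∈ K, ‖p.eval z‖ ≤ M)
    {z : ℂ} (hz : z ∈ K) : ‖(p /ₘ (X - C μ)).eval z‖ ≤ 2 / δ * M := by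
  set q := p /ₘ (X - C μ)
  have hpq (w : ℂ) : (w - μ) * q.eval w = p.eval w - p.eval μ := by
    have h := congrArg (Polynomial.eval w) (modByMonic_add_div p (X - C μ))
    rw [modByMonic_X_sub_C_eq_C_eval, eval_add, eval_mul, eval_C, eval_sub, eval_X, eval_C] at h
    exact eq_sub_of_add_eq' h
  have hfar (w : ℂ) (hwK : w ∈ K) (hw : δ ≤ ‖w - μ‖) : ‖q.eval w‖ ≤ 2 / δ * M := by
    have hmul : δ * ‖q.eval w‖ ≤ M + M := calc
      δ * ‖q.eval w‖ ≤ ‖w - μ‖ * ‖q.eval w‖ := by gcongr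
      _ = ‖p.eval w - p.eval μ‖ := by rw [← norm_mul, hpq]
      _ ≤ M + M := (norm_sub_le _ _).trans
        (add_le_add (hp w hwK) (hp μ (hμ (Metric.mem_closedBall_self hδ.le))))
    rw [div_mul_eq_mul_div, le_div_iff₀ hδ]
    linarith
  rcases le_or_gt δ ‖z - μ‖ with hzμ | hzμ
  · exact hfar z hz hzμ
  · refine Complex.norm_le_of_forall_mem_frontier_norm_le (U := Metric.ball μ δ)
      Metric.isBounded_ball q.differentiable.diffContOnCl (fun w hw => ?_)
      (subset_closure (mem_ball_iff_norm.2 hzμ))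
    rw [frontier_ball μ hδ.ne'] at hw
    exact hfar w (hμ (Metric.sphere_subset_closedBall hw)) (mem_sphere_iff_norm.1 hw).ge

theorem norm_coeff_modByMonic_X_sub_C_mul_le {R : Type*} [NormedCommRing R] {Q : R[X]}
    (hQ : Q.Monic) {a : R} {p : R[X]} {M b : ℝ} (hp : ‖p.eval a‖ ≤ M)
    (hb : ∀ j, ‖(p /ₘ (X - C a) %ₘ Q).coeff j‖ ≤ b) (i : ℕ) :
    ‖(p %ₘ ((X - C a) * Q)).coeff i‖ ≤ M + (1 + ‖a‖) * b := by
  have hconst : ‖(C (p.eval a)).coeff i‖ ≤ M := by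
    rw [coeff_C]
    split_ifs
    · exact hp
    · simpa using (norm_nonneg _).trans hp
  rw [modByMonic_mul_eq (monic_X_sub_C a) hQ, modByMonic_X_sub_C_eq_C_eval, coeff_add]
  exact (norm_add_le _ _).trans (add_le_add hconst (norm_coeff_X_sub_C_mul_le hb a i))

theorem exists_norm_coeff_modByMonic_le {S K : Set ℂ} (hS : IsCompact S) (hSK : S ⊆ interior K)
    (k : ℕ) :
    ∃ B : ℝ, ∀ P : ℂ[X], P.Monic → P.natDegree = k → (∀ μ, P.IsRoot μ → μ ∈ S) →
      ∀ (p : ℂ[X]) (M : ℝ), (∀ z ∈ K, ‖p.eval z‖ ≤ M) → ∀ i, ‖(p %ₘ P).coeff i‖ ≤ B * M := by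
  obtain ⟨R, hR⟩ := hS.isBounded.exists_norm_le
  obtain ⟨δ, hδ, hδK⟩ := hS.exists_cthickening_subset_open isOpen_interior hSK
  have hball {μ : ℂ} (hμ : μ ∈ S) : Metric.closedBall μ δ ⊆ K :=
    (Metric.closedBall_subset_cthickening hμ δ).trans (hδK.trans interior_subset)
  induction k with
  | zero =>
    refine ⟨0, fun P hP hPk _ p M _ i => ?_⟩
    rw [hP.natDegree_eq_zero.1 hPk, modByMonic_one, coeff_zero, norm_zero, zero_mul]
  | succ k ih =>
    obtain ⟨B, hB⟩ := ih
    refine ⟨1 + (1 + R) * (B * (2 / δ)), fun P hP hPk hroots p M hp i => ?_⟩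
    obtain ⟨μ, hμ⟩ := IsAlgClosed.exists_root P (natDegree_pos_iff_degree_pos.1 (by omega)).ne'
    obtain ⟨Q, rfl⟩ := dvd_iff_isRoot.2 hμ
    have hμS : μ ∈ S := hroots μ hμ
    have hQ : Q.Monic := (monic_X_sub_C μ).of_mul_monic_left hP
    have hQk : Q.natDegree = k := by
      rw [(monic_X_sub_C μ).natDegree_mul hQ, natDegree_X_sub_C] at hPk
      omega
    have hQroots (ν : ℂ) (hν : Q.IsRoot ν) : ν ∈ S := hroots ν (root_mul_left_of_isRoot _ hν)
    have hpμ : ‖p.eval μ‖ ≤ M := hp μ (interior_subset (hSK hμS))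
    have hrem (j : ℕ) : ‖(p /ₘ (X - C μ) %ₘ Q).coeff j‖ ≤ B * (2 / δ * M) :=
      hB Q hQ hQk hQroots _ _
        (fun z hz => norm_eval_divByMonic_X_sub_C_le hδ (hball hμS) hp hz) j
    calc ‖(p %ₘ ((X - C μ) * Q)).coeff i‖ ≤ M + (1 + ‖μ‖) * (B * (2 / δ * M)) :=
          norm_coeff_modByMonic_X_sub_C_mul_le hQ hpμ hrem i
      _ ≤ M + (1 + R) * (B * (2 / δ * M)) := by
          gcongr
          · exact (norm_nonneg _).trans (hrem 0)
          · exact hR μ hμS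
      _ = (1 + (1 + R) * (B * (2 / δ))) * M := by ring

theorem exists_abs_coeff_modByMonic_le {S K : Set ℂ} (hS : IsCompact S) (hSK : S ⊆ interior K)
    (k : ℕ) :
    ∃ B : ℝ, ∀ P : ℝ[X], P.Monic → P.natDegree = k → (∀ μ : ℂ, aeval μ P = 0 → μ ∈ S) →
      ∀ (p : ℝ[X]) (M : ℝ), (∀ z ∈ K, ‖aeval z p‖ ≤ M) → ∀ i, |(p %ₘ P).coeff i| ≤ B * M := by
  obtain ⟨B, hB⟩ := exists_norm_coeff_modByMonic_le hS hSK k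
  refine ⟨B, fun P hP hPk hroots p M hp i => ?_⟩
  have h := hB (P.map (algebraMap ℝ ℂ)) (hP.map _) (by rw [natDegree_map, hPk])
    (fun μ hμ => hroots μ (by rwa [IsRoot, eval_map_algebraMap] at hμ))
    (p.map (algebraMap ℝ ℂ)) M (fun z hz => by rw [eval_map_algebraMap]; exact hp z hz) i
  rwa [← map_modByMonic _ hP, coeff_map, norm_algebraMap', Real.norm_eq_abs] at h

end PolynomialRemainder

section DerivativeOfPolynomial

variable {𝕜 E 𝔸 : Type*} [NontriviallyNormedField 𝕜] [NormedAddCommGroup E] [NormedSpace 𝕜 E]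
  [NormedRing 𝔸] [NormedAlgebra 𝕜 𝔸] {L : E → 𝔸} {x : E}

theorem differentiableAt_aeval (hL : DifferentiableAt 𝕜 L x) (p : 𝕜[X]) :
    DifferentiableAt 𝕜 (fun y => aeval (L y) p) x := by
  simp only [aeval_eq_sum_range]
  fun_prop

theorem fderiv_aeval_sub (hL : DifferentiableAt 𝕜 L x) (p q : 𝕜[X]) :
    fderiv 𝕜 (fun y => aeval (L y) (p - q)) x =
      fderiv 𝕜 (fun y => aeval (L y) p) x - fderiv 𝕜 (fun y => aeval (L y) q) x := by
  simp only [map_sub]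
  exact fderiv_fun_sub (differentiableAt_aeval hL p) (differentiableAt_aeval hL q)

theorem fderiv_aeval_eq_sum (hL : DifferentiableAt 𝕜 L x) {p : 𝕜[X]} {n : ℕ}
    (hp : p.natDegree < n) :
    fderiv 𝕜 (fun y => aeval (L y) p) x =
      ∑ i ∈ Finset.range n, p.coeff i • fderiv 𝕜 (fun y => L y ^ i) x := by
  simp only [aeval_eq_sum_range' hp]
  rw [fderiv_fun_sum fun i _ => (hL.fun_pow i).fun_const_smul _]
  exact Finset.sum_congr rfl fun i _ => fderiv_fun_const_smul (hL.fun_pow i) _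

-- By the product rule, the derivative of `χ(L)² q(L)` vanishes wherever `χ(L)` does.
theorem fderiv_aeval_modByMonic_sq (hL : DifferentiableAt 𝕜 L x) {χ : 𝕜[X]}
    (hχ : aeval (L x) χ = 0) (p : 𝕜[X]) :
    fderiv 𝕜 (fun y => aeval (L y) (p %ₘ χ ^ 2)) x = fderiv 𝕜 (fun y => aeval (L y) p) x := by
  have hmul : fderiv 𝕜 (fun y => aeval (L y) (χ * (χ * (p /ₘ χ ^ 2)))) x = 0 := by
    simp only [map_mul _ χ]
    rw [fderiv_fun_mul' (differentiableAt_aeval hL χ)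
      ((differentiableAt_aeval hL χ).fun_mul (differentiableAt_aeval hL _))]
    ext1 h
    simp [hχ]
  rw [modByMonic_eq_sub_mul_div, fderiv_aeval_sub hL, pow_two, mul_assoc, ← pow_two, hmul, sub_zero]

end DerivativeOfPolynomial

section UniformLimit

variable {E 𝔸 : Type*} [NormedAddCommGroup E] [NormedSpace ℝ E] [NormedRing 𝔸]
  [NormedAlgebra ℝ 𝔸] {L : E → 𝔸} {x : E}

/-- `a` is a root of a monic real polynomial of degree `k` all of whose complex roots lie in `S`.
In a real Banach algebra this stands in for the complex spectrum of `a` being contained in `S`. -/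
def HasMonicAnnihilator (k : ℕ) (S : Set ℂ) (a : 𝔸) : Prop :=
  ∃ χ : ℝ[X], χ.Monic ∧ χ.natDegree = k ∧ aeval a χ = 0 ∧ ∀ μ : ℂ, aeval μ χ = 0 → μ ∈ S

theorem exists_eventually_norm_fderiv_aeval_le (hL : ContDiffAt ℝ 1 L x) {S K : Set ℂ}
    (hS : IsCompact S) (hSK : S ⊆ interior K) {k : ℕ}
    (hχ : ∀ᶠ y in nhds x, HasMonicAnnihilator k S (L y)) :
    ∃ B : ℝ, ∀ᶠ y in nhds x, ∀ (p : ℝ[X]) (M : ℝ), (∀ z ∈ K, ‖aeval z p‖ ≤ M) →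
      ‖fderiv ℝ (fun y => aeval (L y) p) y‖ ≤ B * M := by
  obtain ⟨B, hB⟩ := exists_abs_coeff_modByMonic_le hS hSK (2 * k)
  have hdiff : ∀ᶠ y in nhds x, DifferentiableAt ℝ L y :=
    (hL.eventually (by simp)).mono fun y hy => hy.differentiableAt one_ne_zero
  set c : ℕ → ℝ := fun i => ‖fderiv ℝ (fun y => L y ^ i) x‖ + 1
  have hpow : ∀ᶠ y in nhds x, ∀ i ∈ Finset.range (2 * k + 1),
      ‖fderiv ℝ (fun y => L y ^ i) y‖ ≤ c i :=
    (Finset.eventually_all _).2 fun i _ =>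
      ((hL.pow i).continuousAt_fderiv one_ne_zero).norm.eventually_le_const (lt_add_one _)
  refine ⟨∑ i ∈ Finset.range (2 * k + 1), B * c i, ?_⟩
  filter_upwards [hχ, hdiff, hpow] with y ⟨χ, hχm, hχk, hχL, hχS⟩ hLy hpowy p M hp
  have hdeg : (χ ^ 2).natDegree = 2 * k := by rw [hχm.natDegree_pow, hχk]
  have hcoeff : ∀ i, |(p %ₘ χ ^ 2).coeff i| ≤ B * M :=
    hB _ (hχm.pow 2) hdeg (fun μ hμ => hχS μ (by simpa using hμ)) p M hp
  have hrem : (p %ₘ χ ^ 2).natDegree < 2 * k + 1 :=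
    Nat.lt_succ_of_le (hdeg ▸ natDegree_modByMonic_le p (hχm.pow 2))
  calc ‖fderiv ℝ (fun y => aeval (L y) p) y‖
      = ‖∑ i ∈ Finset.range (2 * k + 1),
          (p %ₘ χ ^ 2).coeff i • fderiv ℝ (fun y => L y ^ i) y‖ := by
        rw [← fderiv_aeval_modByMonic_sq hLy hχL, fderiv_aeval_eq_sum hLy hrem]
    _ ≤ ∑ i ∈ Finset.range (2 * k + 1), B * M * c i := norm_sum_le_of_le _ fun i hi => by
        rw [norm_smul, Real.norm_eq_abs]
        exact mul_le_mul (hcoeff i) (hpowy i hi) (norm_nonneg _) ((abs_nonneg _).trans (hcoeff i))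
    _ = (∑ i ∈ Finset.range (2 * k + 1), B * c i) * M := by
        rw [Finset.sum_mul]
        exact Finset.sum_congr rfl fun i _ => by ring

variable {α : Type*} {l : Filter α} {p : α → ℝ[X]} {f : ℂ → ℂ}

theorem exists_uniformCauchySeqOn_fderiv_aeval (hL : ContDiffAt ℝ 1 L x) {S K : Set ℂ}
    (hS : IsCompact S) (hSK : S ⊆ interior K) {k : ℕ}
    (hχ : ∀ᶠ y in nhds x, HasMonicAnnihilator k S (L y))
    (hp : TendstoUniformlyOn (fun m z => aeval z (p m)) f l K) :
    ∃ s ∈ nhds x, UniformCauchySeqOn (fun m y => fderiv ℝ (fun y => aeval (L y) (p m)) y) l s := by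
  obtain ⟨B, hB⟩ := exists_eventually_norm_fderiv_aeval_le hL hS hSK hχ
  have hdiff : ∀ᶠ y in nhds x, DifferentiableAt ℝ L y :=
    (hL.eventually (by simp)).mono fun y hy => hy.differentiableAt one_ne_zero
  refine ⟨_, hB.and hdiff, fun V hV => ?_⟩
  obtain ⟨ε, hε, hεV⟩ := Metric.mem_uniformity_dist.1 hV
  obtain ⟨η, hη, hBη⟩ : ∃ η > 0, B * η < ε := exists_pos_mul_lt hε B
  filter_upwards [hp.uniformCauchySeqOn _ (Metric.dist_mem_uniformity hη)]
  rintro ⟨m, n⟩ hmn y ⟨hBy, hLy⟩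
  refine hεV ?_
  rw [dist_eq_norm, ← fderiv_aeval_sub hLy]
  refine (hBy _ η fun z hz => ?_).trans_lt hBη
  rw [map_sub, ← dist_eq_norm]
  exact (hmn z hz).le

theorem exists_hasFDerivAt_of_tendsto_aeval [CompleteSpace 𝔸] [l.NeBot] {F : E → 𝔸}
    (hL : ContDiffAt ℝ 1 L x) {S K : Set ℂ} (hS : IsCompact S) (hSK : S ⊆ interior K) {k : ℕ}
    (hχ : ∀ᶠ y in nhds x, HasMonicAnnihilator k S (L y))
    (hp : TendstoUniformlyOn (fun m z => aeval z (p m)) f l K)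
    (hF : ∀ᶠ y in nhds x, Tendsto (fun m => aeval (L y) (p m)) l (nhds (F y))) :
    ∃ F' : E →L[ℝ] 𝔸, HasFDerivAt F F' x ∧
      Tendsto (fun m => fderiv ℝ (fun y => aeval (L y) (p m)) x) l (nhds F') := by
  obtain ⟨s, hs, hcauchy⟩ := exists_uniformCauchySeqOn_fderiv_aeval hL hS hSK hχ hp
  have hlim (y : E) (hy : y ∈ s) : Tendsto (fun m => fderiv ℝ (fun y => aeval (L y) (p m)) y) l
      (nhds (limUnder l fun m => fderiv ℝ (fun y => aeval (L y) (p m)) y)) :=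
    (hcauchy.cauchy_map hy).le_nhds_lim
  have hunif := (hcauchy.tendstoUniformlyOn_of_tendsto hlim).tendstoUniformlyOnFilter.mono_right
    (le_principal_iff.2 hs)
  have hdiff : ∀ᶠ y in nhds x, DifferentiableAt ℝ L y :=
    (hL.eventually (by simp)).mono fun y hy => hy.differentiableAt one_ne_zero
  have hderiv : ∀ᶠ q : α × E in l ×ˢ nhds x, HasFDerivAt (fun y => aeval (L y) (p q.1))
      (fderiv ℝ (fun y => aeval (L y) (p q.1)) q.2) q.2 :=
    (hdiff.prod_inr l).mono fun q hq => (differentiableAt_aeval hq (p q.1)).hasFDerivAt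
  exact ⟨_, hasFDerivAt_of_tendstoUniformlyOnFilter hunif hderiv hF, hlim x (mem_of_mem_nhds hs)⟩

end UniformLimit

section MixedTorsion

variable {𝕜 E : Type*} [NontriviallyNormedField 𝕜] [NormedAddCommGroup E] [NormedSpace 𝕜 E]
  {L L₁ L₂ M : E → E →L[𝕜] E} {x : E}

/-- The polarised Nijenhuis torsion of two fields of endomorphisms at the point `x`: the value of
`LM[u,v] − L[Mu,v] − M[u,Lv] + [Mu,Lv]` for the constant vector fields `u` and `v`. For `L = M` this
is `N_L(u,v)`, and for commuting `L` and `M` it is a derivation in each of them. -/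
def mixedTorsion (L M : E → E →L[𝕜] E) (x u v : E) : E :=
  fderiv 𝕜 L x (M x u) v - M x (fderiv 𝕜 L x u v) - fderiv 𝕜 M x (L x v) u
    + L x (fderiv 𝕜 M x v u)

theorem mixedTorsion_swap (L M : E → E →L[𝕜] E) (x u v : E) :
    mixedTorsion M L x v u = -mixedTorsion L M x u v := by
  simp only [mixedTorsion]
  abel

theorem mixedTorsion_algebraMap_left (c : 𝕜) (M : E → E →L[𝕜] E) (x u v : E) :
    mixedTorsion (fun _ => algebraMap 𝕜 (E →L[𝕜] E) c) M x u v = 0 := by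
  simp [mixedTorsion, Algebra.algebraMap_eq_smul_one]

theorem mixedTorsion_add_left (h₁ : DifferentiableAt 𝕜 L₁ x) (h₂ : DifferentiableAt 𝕜 L₂ x)
    (M : E → E →L[𝕜] E) (u v : E) :
    mixedTorsion (fun y => L₁ y + L₂ y) M x u v =
      mixedTorsion L₁ M x u v + mixedTorsion L₂ M x u v := by
  simp only [mixedTorsion, fderiv_fun_add h₁ h₂, _root_.add_apply, map_add]
  abel

theorem mixedTorsion_mul_left (h₁ : DifferentiableAt 𝕜 L₁ x) (h₂ : DifferentiableAt 𝕜 L₂ x)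
    (hcomm : Commute (L₁ x) (M x)) (u v : E) :
    mixedTorsion (fun y => L₁ y * L₂ y) M x u v =
      mixedTorsion L₁ M x u (L₂ x v) + L₁ x (mixedTorsion L₂ M x u v) := by
  have hcomm_apply (w : E) : M x (L₁ x w) = L₁ x (M x w) := (DFunLike.congr_fun hcomm w).symm
  have hderiv (h w : E) : fderiv 𝕜 (fun y => L₁ y * L₂ y) x h w =
      L₁ x (fderiv 𝕜 L₂ x h w) + fderiv 𝕜 L₁ x h (L₂ x w) := by
    rw [fderiv_fun_mul' h₁ h₂]
    rfl
  simp only [mixedTorsion, hderiv, mul_apply_eq_comp, map_add, map_sub, hcomm_apply]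
  abel

theorem mixedTorsion_aeval_left (hL : DifferentiableAt 𝕜 L x) (hcomm : Commute (L x) (M x))
    (h : ∀ u v, mixedTorsion L M x u v = 0) (p : 𝕜[X]) (u v : E) :
    mixedTorsion (fun y => aeval (L y) p) M x u v = 0 := by
  induction p using Polynomial.induction_on generalizing u v with
  | C c => simpa only [aeval_C] using mixedTorsion_algebraMap_left c M x u v
  | add p q hp hq =>
    simp only [map_add]
    rw [mixedTorsion_add_left (differentiableAt_aeval hL p) (differentiableAt_aeval hL q), hp, hq,
      add_zero]
  | monomial n c hn =>
    simp only [pow_succ', mul_left_comm (C c) X, map_mul _ X, aeval_X]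
    rw [mixedTorsion_mul_left hL (differentiableAt_aeval hL _) hcomm, h, hn, map_zero, add_zero]

theorem mixedTorsion_aeval_aeval (hL : DifferentiableAt 𝕜 L x)
    (h : ∀ u v, mixedTorsion L L x u v = 0) (p q : 𝕜[X]) (u v : E) :
    mixedTorsion (fun y => aeval (L y) p) (fun y => aeval (L y) q) x u v = 0 := by
  have hcomm : Commute (L x) (aeval (L x) q) := by
    simpa only [aeval_X] using (Commute.all X q).map (aeval (L x))
  refine mixedTorsion_aeval_left hL hcomm (fun u v => ?_) p u v
  rw [mixedTorsion_swap, mixedTorsion_aeval_left hL (Commute.refl _) h, neg_zero]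

theorem tendsto_clm_apply {α F G : Type*} [NormedAddCommGroup F] [NormedSpace 𝕜 F]
    [NormedAddCommGroup G] [NormedSpace 𝕜 G] {l : Filter α} {T : α → F →L[𝕜] G}
    {T₀ : F →L[𝕜] G} {w : α → F} {w₀ : F} (hT : Tendsto T l (nhds T₀))
    (hw : Tendsto w l (nhds w₀)) : Tendsto (fun a => T a (w a)) l (nhds (T₀ w₀)) :=
  (isBoundedBilinearMap_apply.continuous.tendsto (T₀, w₀)).comp (hT.prodMk_nhds hw)

theorem tendsto_mixedTorsion {α : Type*} {l : Filter α} {A B : α → E → E →L[𝕜] E}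
    (hA : Tendsto (fun a => A a x) l (nhds (L x)))
    (hA' : Tendsto (fun a => fderiv 𝕜 (A a) x) l (nhds (fderiv 𝕜 L x)))
    (hB : Tendsto (fun a => B a x) l (nhds (M x)))
    (hB' : Tendsto (fun a => fderiv 𝕜 (B a) x) l (nhds (fderiv 𝕜 M x))) (u v : E) :
    Tendsto (fun a => mixedTorsion (A a) (B a) x u v) l (nhds (mixedTorsion L M x u v)) := by
  have hu : Tendsto (fun _ : α => u) l (nhds u) := tendsto_const_nhds
  have hv : Tendsto (fun _ : α => v) l (nhds v) := tendsto_const_nhds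
  have h₁ := tendsto_clm_apply (tendsto_clm_apply hA' (tendsto_clm_apply hB hu)) hv
  have h₂ := tendsto_clm_apply hB (tendsto_clm_apply (tendsto_clm_apply hA' hu) hv)
  have h₃ := tendsto_clm_apply (tendsto_clm_apply hB' (tendsto_clm_apply hA hv)) hu
  have h₄ := tendsto_clm_apply hA (tendsto_clm_apply (tendsto_clm_apply hB' hv) hu)
  exact ((h₁.sub h₂).sub h₃).add h₄

end MixedTorsion

section TensorField

/-- The continuous linear endomorphism of `ι → ℝ` defined by a square matrix, which turns a
matrix-valued tensor field into a field of endomorphisms of a normed space. -/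
def matrixToCLM : Matrix ι ι ℝ ≃ₐ[ℝ] ((ι → ℝ) →L[ℝ] (ι → ℝ)) :=
  Matrix.toLinAlgEquiv'.trans (Module.End.toContinuousLinearMap (ι → ℝ))

theorem matrixToCLM_apply (A : Matrix ι ι ℝ) (v : ι → ℝ) : matrixToCLM A v = A *ᵥ v := rfl

theorem matrixToCLM_aeval (A : Matrix ι ι ℝ) (p : ℝ[X]) :
    matrixToCLM (aeval A p) = aeval (matrixToCLM A) p :=
  (aeval_algHom_apply matrixToCLM A p).symm

theorem continuous_matrixToCLM : Continuous (matrixToCLM : Matrix ι ι ℝ → _) :=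
  (matrixToCLM : Matrix ι ι ℝ ≃ₐ[ℝ] _).toLinearMap.continuous_of_finiteDimensional

theorem contDiffAt_matrixToCLM {E : Type*} [NormedAddCommGroup E] [NormedSpace ℝ E]
    {L : E → Matrix ι ι ℝ} {x : E} {k : WithTop ℕ∞}
    (hL : ∀ i j, ContDiffAt ℝ k (fun y => L y i j) x) :
    ContDiffAt ℝ k (fun y => matrixToCLM (L y)) x :=
  (LinearMap.toContinuousLinearMap ((matrixToCLM (ι := ι)).toLinearMap ∘ₗ
    (Matrix.ofLinearEquiv ℝ).toLinearMap)).contDiff.contDiffAt.comp x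
      (contDiffAt_pi.2 fun i => contDiffAt_pi.2 fun j => hL i j)

theorem fderiv_appT_apply {L : (ι → ℝ) → Matrix ι ι ℝ} {u : (ι → ℝ) → ι → ℝ} {x : ι → ℝ}
    (hL : DifferentiableAt ℝ (fun y => matrixToCLM (L y)) x) (hu : DifferentiableAt ℝ u x)
    (h : ι → ℝ) :
    fderiv ℝ (appT L u) x h =
      matrixToCLM (L x) (fderiv ℝ u x h) + fderiv ℝ (fun y => matrixToCLM (L y)) x h (u x) :=
  DFunLike.congr_fun (fderiv_clm_apply hL hu) h

theorem nijenhuis_eq_mixedTorsion {L : (ι → ℝ) → Matrix ι ι ℝ} {u v : (ι → ℝ) → ι → ℝ}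
    {x : ι → ℝ} (hL : DifferentiableAt ℝ (fun y => matrixToCLM (L y)) x)
    (hu : DifferentiableAt ℝ u x) (hv : DifferentiableAt ℝ v x) :
    nijenhuis L u v x =
      mixedTorsion (fun y => matrixToCLM (L y)) (fun y => matrixToCLM (L y)) x (u x) (v x) := by
  simp only [nijenhuis, vbracket, fderiv_appT_apply hL hu, fderiv_appT_apply hL hv]
  simp only [appT, ← matrixToCLM_apply, map_sub, map_add, mixedTorsion]
  abel

theorem nijenhuisZero_iff_mixedTorsion {L : (ι → ℝ) → Matrix ι ι ℝ} {U : Set (ι → ℝ)}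
    (hL : ∀ x ∈ U, DifferentiableAt ℝ (fun y => matrixToCLM (L y)) x) :
    NijenhuisZero L U ↔ ∀ x ∈ U, ∀ u v,
      mixedTorsion (fun y => matrixToCLM (L y)) (fun y => matrixToCLM (L y)) x u v = 0 := by
  refine ⟨fun h x hx u v => ?_, fun h u v hu hv x hx => ?_⟩
  · rw [← nijenhuis_eq_mixedTorsion (u := fun _ => u) (v := fun _ => v) (hL x hx)
      (differentiableAt_const u) (differentiableAt_const v)]
    exact h _ _ contDiff_const contDiff_const x hx
  · rw [nijenhuis_eq_mixedTorsion (hL x hx) (hu.differentiable (by simp) x)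
      (hv.differentiable (by simp) x)]
    exact h x hx _ _

open scoped Matrix.Norms.Operator in
theorem exists_isCompact_eventually_spectrum_subset {X : Type*} [TopologicalSpace X]
    {A : X → Matrix ι ι ℂ} {x : X} (hA : ContinuousAt A x) {V : Set ℂ} (hV : IsOpen V)
    (hAV : spectrum ℂ (A x) ⊆ V) :
    ∃ S, IsCompact S ∧ S ⊆ V ∧ ∀ᶠ y in nhds x, spectrum ℂ (A y) ⊆ S := by
  obtain ⟨S, hS, hAS, hSV⟩ := exists_compact_between (spectrum.isCompact (A x)) hV hAV
  have hsemi := (upperHemicontinuous_spectrum ℂ (Matrix ι ι ℂ)).upperHemicontinuousAt (A x)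
  have hmem := hA.eventually
    (upperHemicontinuousAt_iff_forall_isOpen.1 hsemi _ isOpen_interior hAS)
  exact ⟨S, hS, hSV, hmem.mono fun y hy => hy.trans interior_subset⟩

theorem hasMonicAnnihilator_matrixToCLM {A : Matrix ι ι ℝ} {S : Set ℂ}
    (hA : spectrum ℂ (A.map (algebraMap ℝ ℂ)) ⊆ S) :
    HasMonicAnnihilator (Fintype.card ι) S (matrixToCLM A) := by
  refine ⟨A.charpoly, A.charpoly_monic, A.charpoly_natDegree_eq_dim, ?_, fun μ hμ => hA ?_⟩
  · rw [← matrixToCLM_aeval, Matrix.aeval_self_charpoly, map_zero]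
  · rwa [Matrix.mem_spectrum_iff_isRoot_charpoly, Matrix.charpoly_map, IsRoot,
      eval_map_algebraMap]

theorem nijenhuisZero_aeval {L : (ι → ℝ) → Matrix ι ι ℝ} {U : Set (ι → ℝ)}
    (hL : ∀ x ∈ U, DifferentiableAt ℝ (fun y => matrixToCLM (L y)) x) (hNL : NijenhuisZero L U)
    (q : ℝ[X]) : NijenhuisZero (fun x => aeval (L x) q) U := by
  rw [nijenhuisZero_iff_mixedTorsion hL] at hNL
  rw [nijenhuisZero_iff_mixedTorsion] <;> simp only [matrixToCLM_aeval]
  · exact fun x hx => mixedTorsion_aeval_aeval (hL x hx) (hNL x hx) q q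
  · exact fun x hx => differentiableAt_aeval (hL x hx) q

theorem exists_isCompact_eventually_hasMonicAnnihilator {X : Type*} [TopologicalSpace X]
    {A : X → Matrix ι ι ℝ} {x : X} (hA : ContinuousAt A x) {V : Set ℂ} (hV : IsOpen V)
    (hAV : spectrum ℂ ((A x).map (algebraMap ℝ ℂ)) ⊆ V) :
    ∃ S, IsCompact S ∧ S ⊆ V ∧
      ∀ᶠ y in nhds x, HasMonicAnnihilator (Fintype.card ι) S (matrixToCLM (A y)) := by
  have hmap : ContinuousAt (fun y => (A y).map (algebraMap ℝ ℂ)) x :=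
    (continuous_id.matrix_map Complex.continuous_ofReal).continuousAt.comp hA
  obtain ⟨S, hS, hSV, hspec⟩ := exists_isCompact_eventually_spectrum_subset hmap hV hAV
  exact ⟨S, hS, hSV, hspec.mono fun _ => hasMonicAnnihilator_matrixToCLM⟩

theorem tendsto_aeval_matrixToCLM {α : Type*} {l : Filter α} {p : α → ℝ[X]} {A B : Matrix ι ι ℝ}
    (h : ∀ i j, Tendsto (fun m => aeval A (p m) i j) l (nhds (B i j))) :
    Tendsto (fun m => aeval (matrixToCLM A) (p m)) l (nhds (matrixToCLM B)) := by
  have hmatrix : Tendsto (fun m => aeval A (p m)) l (nhds B) :=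
    tendsto_pi_nhds.2 fun i => tendsto_pi_nhds.2 (h i)
  simpa only [Function.comp_def, matrixToCLM_aeval] using
    (continuous_matrixToCLM.tendsto B).comp hmatrix

theorem nijenhuisZero_of_repFunOfL {L FL : (ι → ℝ) → Matrix ι ι ℝ} {U : Set (ι → ℝ)}
    (hU : IsOpen U) (hL : ∀ x ∈ U, ∀ i j, ContDiffAt ℝ 1 (fun y => L y i j) x)
    (hNL : NijenhuisZero L U) {K : Set ℂ} {f : ℂ → ℂ} (hLK : SpectrumIn L U K)
    (hFL : RepFunOfL L U K f FL) : NijenhuisZero FL U := by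
  obtain ⟨p, hp, hpFL⟩ := hFL
  have hdiff (x : ι → ℝ) (hx : x ∈ U) : DifferentiableAt ℝ (fun y => matrixToCLM (L y)) x :=
    (contDiffAt_matrixToCLM (hL x hx)).differentiableAt one_ne_zero
  have hlim (x : ι → ℝ) (hx : x ∈ U) :
      Tendsto (fun m => aeval (matrixToCLM (L x)) (p m)) atTop (nhds (matrixToCLM (FL x))) :=
    tendsto_aeval_matrixToCLM (hpFL x hx)
  have hderiv (x : ι → ℝ) (hx : x ∈ U) : ∃ F', HasFDerivAt (fun y => matrixToCLM (FL y)) F' x ∧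
      Tendsto (fun m => fderiv ℝ (fun y => aeval (matrixToCLM (L y)) (p m)) x) atTop
        (nhds F') := by
    have hcont : ContinuousAt L x := continuousAt_pi.2 fun i => continuousAt_pi.2 fun j =>
      (hL x hx i j).continuousAt
    obtain ⟨S, hS, hSK, hχ⟩ :=
      exists_isCompact_eventually_hasMonicAnnihilator hcont isOpen_interior (hLK x hx)
    exact exists_hasFDerivAt_of_tendsto_aeval (contDiffAt_matrixToCLM (hL x hx)) hS hSK hχ hp
      ((hU.eventually_mem hx).mono hlim)
  rw [nijenhuisZero_iff_mixedTorsion hdiff] at hNL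
  refine (nijenhuisZero_iff_mixedTorsion fun x hx => ?_).2 fun x hx u v => ?_
  · obtain ⟨F', hF', -⟩ := hderiv x hx
    exact hF'.differentiableAt
  · obtain ⟨F', hF', hlim'⟩ := hderiv x hx
    rw [← hF'.fderiv] at hlim'
    refine tendsto_nhds_unique
      (tendsto_mixedTorsion (hlim x hx) hlim' (hlim x hx) hlim' u v) ?_
    simp only [mixedTorsion_aeval_aeval (hdiff x hx) (hNL x hx)]
    exact tendsto_const_nhds

theorem stmt13_general {U : Set (ι → ℝ)} (hU : IsOpen U) {L : (ι → ℝ) → Matrix ι ι ℝ}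
    (hL : ∀ i j, ContDiffOn ℝ 1 (fun x => L x i j) U) (hNL : NijenhuisZero L U) :
    (∀ q : ℝ[X], NijenhuisZero (fun x => aeval (L x) q) U) ∧
      ∀ (K : Set ℂ) (f : ℂ → ℂ) (FL : (ι → ℝ) → Matrix ι ι ℝ),
        SpectrumIn L U K → RepFunOfL L U K f FL → NijenhuisZero FL U := by
  have hLat (x : ι → ℝ) (hx : x ∈ U) (i j : ι) : ContDiffAt ℝ 1 (fun y => L y i j) x :=
    (hL i j).contDiffAt (hU.mem_nhds hx)
  have hdiff (x : ι → ℝ) (hx : x ∈ U) : DifferentiableAt ℝ (fun y => matrixToCLM (L y)) x :=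
    (contDiffAt_matrixToCLM (hLat x hx)).differentiableAt one_ne_zero
  exact ⟨nijenhuisZero_aeval hdiff hNL,
    fun K f FL hLK hFL => nijenhuisZero_of_repFunOfL hU hLat hNL hLK hFL⟩

end TensorField

theorem stmt13 {n : ℕ} (U : Set (Fin n → ℝ)) (hU : IsOpen U)
    (L : (Fin n → ℝ) → Matrix (Fin n) (Fin n) ℝ)
    (hLsmooth : ∀ i j, ContDiffOn ℝ (⊤ : ℕ∞) (fun x => L x i j) U)
    (hNL : NijenhuisZero L U) :
    -- then `N_{p(L)} = 0` for every real polynomial `p` …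
    (∀ q : Polynomial ℝ, NijenhuisZero (fun x => aeval (L x) q) U) ∧
    -- … and `N_{f(L)} = 0` for every admissible function `f`
    (∀ (K : Set ℂ) (f : ℂ → ℂ) (FL : (Fin n → ℝ) → Matrix (Fin n) (Fin n) ℝ),
      AdmissibleFun K f → SpectrumIn L U K → RepFunOfL L U K f FL →
      NijenhuisZero FL U) := by
  have h := stmt13_general hU (fun i j => (hLsmooth i j).of_le (by simp)) hNL
  exact ⟨h.1, fun K f FL _ => h.2 K f FL⟩
end
end

section
/- Let L be a (1,1)-tensor field with N_L = 0 and let χ = χ1·χ2 be an admissible factorisation of its characteristic polynomial, with deg χ1 = r. Then around every point there exists a local coordinate system (x¹,…,x^r, y^{r+1},…,y^n) such that ∂_{x^1},…,∂_{x^r} generate D1 = ker χ1(L), ∂_{y^{r+1}},…,∂_{y^n} generate D2 = ker χ2(L), and L has the block-diagonal form L(x,y) = diag(L1(x), L2(y)), where the entries of L1 depend only on x and the entries of L2 depend only on y. In particular, the distributions D1 and D2 are integrable. -/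
open Matrix Polynomial Filter

noncomputable section

variable {ι : Type} [Fintype ι] [DecidableEq ι]

/-- The span of the first `r` coordinate vector fields. -/
def coordSpan (n r : ℕ) : Submodule ℝ (Fin n → ℝ) :=
  Submodule.span ℝ {e : Fin n → ℝ | ∃ i : Fin n, (i : ℕ) < r ∧ e = Pi.single i 1}

/-- The span of the last `n - r` coordinate vector fields. -/
def coordSpan' (n r : ℕ) : Submodule ℝ (Fin n → ℝ) :=
  Submodule.span ℝ {e : Fin n → ℝ | ∃ i : Fin n, r ≤ (i : ℕ) ∧ e = Pi.single i 1}

/-- The Jacobian matrix of a map `Φ : ℝⁿ → ℝⁿ`. -/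
def jac {ι : Type} [Fintype ι] [DecidableEq ι] (Φ : (ι → ℝ) → ι → ℝ) (x : ι → ℝ) :
    Matrix ι ι ℝ :=
  Matrix.of fun i j => pd j (fun y => Φ y i) x

/-
The factorisation provides a smooth spectral projection `P` of `L`, with range `D₁` and kernel `D₂`:
it is `q(L) (p(L) + q(L))⁻¹` for `p = χ₁`, `q = χ₂`. The obstruction to the involutivity of `D₁` is
an antisymmetric tensor which, when `N_L = 0`, satisfies the torsion identity itself; since an
operator intertwining two endomorphisms with coprime annihilating polynomials vanishes, so does this
tensor. The same applies to `D₂`.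

By Frobenius, `D₁` and `D₂` have first integrals, which together form a chart in which `P` is
constant. A frame of an involutive distribution that a constant projection maps to a constant frame
commutes, and its joint flow is obtained from the inverse function theorem on a space of curves.

In the chart `L` commutes with the constant projection, hence is block-diagonal. For `a` in `D₁`,
the mixed part of the torsion identity says that the map `b ↦ (∂_b L) a` on `D₂` intertwines the
block of `L` on `D₂` with that on `D₁`, hence vanishes by coprimality.
-/

open scoped Topology ContDiff unitInterval

section CurveSpace

universe u

variable {K : Type*} [TopologicalSpace K] [CompactSpace K]
  {E F : Type u} [NormedAddCommGroup E] [NormedSpace ℝ E] [NormedAddCommGroup F] [NormedSpace ℝ F]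

/-- Pointwise application of a continuous family of operators to a continuous function, as a
bounded bilinear map. It expresses the derivative of postcomposition on spaces of curves. -/
def pointwiseApply : C(K, E →L[ℝ] F) →L[ℝ] C(K, E) →L[ℝ] C(K, F) :=
  LinearMap.mkContinuous₂
    (LinearMap.mk₂ ℝ
      (fun (T : C(K, E →L[ℝ] F)) (z : C(K, E)) => (⟨fun t => T t (z t), by fun_prop⟩ : C(K, F)))
      (by intros; ext; simp) (by intros; ext; simp) (by intros; ext; simp)
      (by intros; ext; simp)) 1 (by
    intro T z
    rw [ContinuousMap.norm_le _ (by positivity)]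
    intro t
    simp only [LinearMap.mk₂_apply, ContinuousMap.coe_mk, one_mul]
    exact (T t).le_of_opNorm_le_of_le (T.norm_coe_le_norm t) (z.norm_coe_le_norm t))

@[simp]
theorem pointwiseApply_apply (T : C(K, E →L[ℝ] F)) (z : C(K, E)) (t : K) :
    pointwiseApply T z t = T t (z t) := rfl

theorem norm_image_add_sub_sub_le {f : E → F} {f' : E → E →L[ℝ] F}
    (hf : ∀ x, HasFDerivAt f (f' x) x) {x h : E} {c : ℝ}
    (hc : ∀ θ ∈ Set.Icc (0 : ℝ) 1, ‖f' (x + θ • h) - f' x‖ ≤ c) :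
    ‖f (x + h) - f x - f' x h‖ ≤ c * ‖h‖ := by
  have hsegment : ∀ ξ ∈ segment ℝ x (x + h), ‖f' ξ - f' x‖ ≤ c := by
    rw [segment_eq_image']
    rintro _ ⟨θ, hθ, rfl⟩
    simpa using hc θ hθ
  simpa using (convex_segment x (x + h)).norm_image_sub_le_of_norm_hasFDerivWithin_le'
    (fun ξ _ => (hf ξ).hasFDerivWithinAt) hsegment (left_mem_segment ℝ _ _)
    (right_mem_segment ℝ _ _)

theorem hasFDerivAt_postcomp {f : C(E, F)} {f' : C(E, E →L[ℝ] F)}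
    (hf : ∀ x, HasFDerivAt f (f' x) x) (z : C(K, E)) :
    HasFDerivAt (fun w : C(K, E) => f.comp w) (pointwiseApply (f'.comp z)) z := by
  rw [hasFDerivAt_iff_isLittleO_nhds_zero, Asymptotics.isLittleO_iff]
  intro c hc
  obtain ⟨δ, hδ, hball⟩ := (Metric.continuous_iff (β := C(K, E →L[ℝ] F))).1
    (ContinuousMap.continuous_postcomp f') z c hc
  filter_upwards [Metric.ball_mem_nhds (0 : C(K, E)) hδ] with h hh
  rw [mem_ball_zero_iff] at hh
  rw [ContinuousMap.norm_le _ (by positivity)]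
  intro t
  have hvariation : ∀ θ ∈ Set.Icc (0 : ℝ) 1, ‖f' (z t + θ • h t) - f' (z t)‖ ≤ c := by
    intro θ hθ
    have hdist : dist (z + θ • h) z < δ := by
      rw [dist_eq_norm, add_sub_cancel_left, norm_smul, Real.norm_eq_abs, abs_of_nonneg hθ.1]
      nlinarith [norm_nonneg h, hθ.2]
    rw [← dist_eq_norm]
    exact (ContinuousMap.dist_apply_le_dist t).trans (hball _ hdist).le
  calc ‖(f.comp (z + h) - f.comp z - pointwiseApply (f'.comp z) h) t‖
      = ‖f (z t + h t) - f (z t) - f' (z t) (h t)‖ := rfl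
    _ ≤ c * ‖h t‖ := norm_image_add_sub_sub_le hf hvariation
    _ ≤ c * ‖h‖ := by gcongr; exact h.norm_coe_le_norm t

theorem contDiff_nat_postcomp (n : ℕ) {f : C(E, F)} (hf : ContDiff ℝ ∞ f) :
    ContDiff ℝ n (fun w : C(K, E) => f.comp w) := by
  induction n generalizing F with
  | zero => exact contDiff_zero.2 (ContinuousMap.continuous_postcomp f)
  | succ n ih =>
    have hf' : ContDiff ℝ ∞ (fderiv ℝ f) := hf.fderiv_right (by simp)
    push_cast
    rw [contDiff_succ_iff_hasFDerivAt]
    exact ⟨_, (pointwiseApply (K := K)).contDiff.comp (ih (f := ⟨fderiv ℝ f, hf'.continuous⟩) hf'),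
      hasFDerivAt_postcomp fun x => (hf.differentiable (by simp) x).hasFDerivAt⟩

theorem contDiff_postcomp {f : C(E, F)} (hf : ContDiff ℝ ∞ f) :
    ContDiff ℝ ∞ (fun w : C(K, E) => f.comp w) :=
  contDiff_infty.2 fun n => contDiff_nat_postcomp n hf

end CurveSpace

section Primitive

variable {E : Type*} [NormedAddCommGroup E]

/-- The extension of a curve on `[0, 1]` to `ℝ` that is constant on either side of `[0, 1]`, so
that curves can be integrated over intervals of `ℝ`. -/
def curveExtend (z : C(I, E)) : ℝ → E := Set.IccExtend zero_le_one z

@[fun_prop]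
theorem continuous_curveExtend (z : C(I, E)) : Continuous (curveExtend z) :=
  z.continuous.Icc_extend'

theorem curveExtend_coe (z : C(I, E)) (t : I) : curveExtend z t = z t :=
  Set.IccExtend_val _ _ _

variable [NormedSpace ℝ E]

/-- The primitive of a curve vanishing at `0`, as a bounded linear operator on the space of
curves. It turns initial value problems into equations between curves. -/
def curvePrimitive : C(I, E) →L[ℝ] C(I, E) :=
  LinearMap.mkContinuous
    { toFun := fun z => ⟨fun t => ∫ s in (0 : ℝ)..t, curveExtend z s,
        (intervalIntegral.continuous_primitive
          (fun _ _ => (continuous_curveExtend z).intervalIntegrable _ _) 0).comp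
          continuous_subtype_val⟩
      map_add' := fun z w => ContinuousMap.ext fun _ =>
        intervalIntegral.integral_add ((continuous_curveExtend z).intervalIntegrable _ _)
          ((continuous_curveExtend w).intervalIntegrable _ _)
      map_smul' := fun c z => ContinuousMap.ext fun _ =>
        intervalIntegral.integral_smul c (curveExtend z) } 1 (by
    intro z
    rw [ContinuousMap.norm_le _ (by positivity)]
    intro t
    calc ‖∫ s in (0 : ℝ)..t, curveExtend z s‖ ≤ ‖z‖ * |(t : ℝ) - 0| :=
          intervalIntegral.norm_integral_le_of_norm_le_const fun _ _ => z.norm_coe_le_norm _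
      _ ≤ ‖z‖ * 1 := by gcongr; rw [sub_zero, abs_of_nonneg t.2.1]; exact t.2.2
      _ = 1 * ‖z‖ := by ring)

theorem curvePrimitive_apply (z : C(I, E)) (t : I) :
    curvePrimitive z t = ∫ s in (0 : ℝ)..t, curveExtend z s := rfl

end Primitive

section InverseFunction

variable {E F : Type*} [NormedAddCommGroup E] [NormedSpace ℝ E] [CompleteSpace E]
  [NormedAddCommGroup F] [NormedSpace ℝ F]

theorem exists_local_diffeo {f : E → F} {U : Set E} (hU : IsOpen U) (hf : ContDiffOn ℝ ∞ f U)
    {a : E} (ha : a ∈ U) (f' : E ≃L[ℝ] F) (hf' : HasFDerivAt f (f' : E →L[ℝ] F) a) :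
    ∃ e : OpenPartialHomeomorph E F, a ∈ e.source ∧ e.source ⊆ U ∧ (∀ x, e x = f x) ∧
      ContDiffOn ℝ ∞ e.symm e.target ∧
      ∀ x ∈ e.source, ∃ g : E ≃L[ℝ] F, HasFDerivAt f (g : E →L[ℝ] F) x := by
  have hfa : ∀ x ∈ U, ContDiffAt ℝ ∞ f x := fun x hx => hf.contDiffAt (hU.mem_nhds hx)
  set V := U ∩ fderiv ℝ f ⁻¹' Set.range ((↑) : (E ≃L[ℝ] F) → E →L[ℝ] F)
  have hV : IsOpen V := (hf.continuousOn_fderiv_of_isOpen hU (by simp)).isOpen_inter_preimage hU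
    ContinuousLinearEquiv.isOpen
  have hinvertible : ∀ x ∈ V, ∃ g : E ≃L[ℝ] F, HasFDerivAt f (g : E →L[ℝ] F) x := by
    rintro x ⟨hxU, g, hg⟩
    exact ⟨g, hg ▸ ((hfa x hxU).differentiableAt (by simp)).hasFDerivAt⟩
  set e := ((hfa a ha).toOpenPartialHomeomorph f hf' (by simp)).restrOpen V hV
  have hsource : e.source ⊆ V := Set.inter_subset_right
  refine ⟨e, ⟨(hfa a ha).mem_toOpenPartialHomeomorph_source hf' (by simp), ha, f',
    hf'.fderiv.symm⟩, hsource.trans Set.inter_subset_left, fun _ => rfl, fun y hy => ?_,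
    fun x hx => hinvertible x (hsource hx)⟩
  have hy' : e.symm y ∈ V := hsource (e.map_target hy)
  obtain ⟨g, hg⟩ := hinvertible _ hy'
  exact (e.contDiffAt_symm hy hg (hfa _ hy'.1)).contDiffWithinAt

end InverseFunction

section Flow

universe u

variable {E : Type u} [NormedAddCommGroup E] [NormedSpace ℝ E]

theorem exists_hasDerivAt_of_eq_const_add_curvePrimitive [CompleteSpace E] {y : E}
    {z w : C(I, E)} (hz : z = ContinuousLinearMap.const ℝ I y + curvePrimitive w) :
    ∃ Z : ℝ → E, (∀ t, HasDerivAt Z (curveExtend w t) t) ∧ ∀ t : I, Z t = z t :=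
  ⟨fun t => y + ∫ s in (0 : ℝ)..t, curveExtend w s,
    fun t => ((continuous_curveExtend w).integral_hasStrictDerivAt 0 t).hasDerivAt.const_add y,
    fun t => (DFunLike.congr_fun hz t).symm⟩

theorem curvePrimitive_eq_of_hasDerivAt [CompleteSpace E] {B B' : ℝ → E}
    (hB : ∀ t, HasDerivAt B (B' t) t) (hB' : Continuous B') (h0 : B 0 = 0) {w b : C(I, E)}
    (hw : ∀ t : I, w t = B' t) (hb : ∀ t : I, b t = B t) : curvePrimitive w = b := by
  ext t
  have hftc : ∫ s in (0 : ℝ)..t, B' s = B t := by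
    simpa [h0] using intervalIntegral.integral_eq_sub_of_hasDerivAt (fun s _ => hB s)
      (hB'.intervalIntegrable 0 t)
  rw [curvePrimitive_apply, hb, ← hftc]
  refine intervalIntegral.integral_congr fun s hs => ?_
  rw [Set.uIcc_of_le t.2.1] at hs
  lift s to I using ⟨hs.1, hs.2.trans t.2.2⟩
  exact (curveExtend_coe w s).trans (hw s)

variable {F : Type u} [NormedAddCommGroup F] [NormedSpace ℝ F]

/-- The velocities `t ↦ A (z t) x` prescribed along the curve `z` by the vector field `A · x`,
for a family `A` of vector fields depending linearly on the parameter `x`. -/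
def velocity (A : C(E, F →L[ℝ] E)) (x : F) (z : C(I, E)) : C(I, E) :=
  pointwiseApply (A.comp z) (ContinuousLinearMap.const ℝ I x)

/-- The derivative of `velocity A` at `(x, z)`, where `A'` is the derivative of `A`. -/
def velocityDeriv (A : C(E, F →L[ℝ] E)) (A' : C(E, E →L[ℝ] F →L[ℝ] E)) (x : F) (z : C(I, E)) :
    F × C(I, E) →L[ℝ] C(I, E) :=
  (pointwiseApply (A.comp z) ∘L ContinuousLinearMap.const ℝ I).coprod
    (pointwiseApply.flip (ContinuousLinearMap.const ℝ I x) ∘L pointwiseApply (A'.comp z))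

/-- The map whose value at `((x, y), z)` is `((x, y), 0)` exactly when the curve `z` solves the
initial value problem `z' = A z x`, `z 0 = y`. The parameters are kept as a component of the value
so that the inverse function theorem yields solutions depending smoothly on them. -/
def initialValueMap (A : C(E, F →L[ℝ] E)) (s : (F × E) × C(I, E)) : (F × E) × C(I, E) :=
  (s.1, s.2 - ContinuousLinearMap.const ℝ I s.1.2 - curvePrimitive (velocity A s.1.1 s.2))

variable {A : C(E, F →L[ℝ] E)} {A' : C(E, E →L[ℝ] F →L[ℝ] E)}

theorem velocity_apply (x : F) (z : C(I, E)) (t : I) : velocity A x z t = A (z t) x := rfl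

theorem velocity_zero (z : C(I, E)) : velocity A 0 z = 0 := by
  ext t
  exact map_zero (A (z t))

theorem velocityDeriv_apply (x : F) (z : C(I, E)) (h : F) (w : C(I, E)) (t : I) :
    velocityDeriv A A' x z (h, w) t = A (z t) h + A' (z t) (w t) x := rfl

theorem velocityDeriv_zero_apply (z : C(I, E)) (d : F × C(I, E)) :
    velocityDeriv A A' 0 z d = velocity A d.1 z := by
  ext t
  simp [velocityDeriv_apply (w := d.2), velocity_apply]

theorem contDiff_velocity (hA : ContDiff ℝ ∞ A) :
    ContDiff ℝ ∞ fun s : F × C(I, E) => velocity A s.1 s.2 :=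
  ((pointwiseApply (K := I) (E := F) (F := E)).contDiff.comp
    ((contDiff_postcomp hA).comp contDiff_snd)).clm_apply
    ((ContinuousLinearMap.contDiff _).comp contDiff_fst)

theorem hasFDerivAt_velocity (hA : ∀ x, HasFDerivAt A (A' x) x) (s : F × C(I, E)) :
    HasFDerivAt (fun s : F × C(I, E) => velocity A s.1 s.2) (velocityDeriv A A' s.1 s.2) s := by
  have hcoeff : HasFDerivAt (fun s : F × C(I, E) => A.comp s.2) _ s :=
    (hasFDerivAt_postcomp hA s.2).comp s hasFDerivAt_snd
  have hparam : HasFDerivAt (fun s : F × C(I, E) => ContinuousLinearMap.const ℝ I s.1) _ s :=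
    (ContinuousLinearMap.const ℝ I ∘L ContinuousLinearMap.fst ℝ F C(I, E)).hasFDerivAt
  refine ((pointwiseApply (K := I) (E := F) (F := E)).hasFDerivAt_of_bilinear
    hcoeff hparam).congr_fderiv ?_
  ext d t <;> simp [velocityDeriv]

theorem contDiff_initialValueMap (hA : ContDiff ℝ ∞ A) : ContDiff ℝ ∞ (initialValueMap A) :=
  contDiff_fst.prodMk ((contDiff_snd.sub
    ((ContinuousLinearMap.const ℝ I).contDiff.comp contDiff_fst.snd)).sub
    (curvePrimitive.contDiff.comp
      ((contDiff_velocity hA).comp (contDiff_fst.fst.prodMk contDiff_snd))))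

theorem fderiv_initialValueMap_apply (hA : ∀ x, HasFDerivAt A (A' x) x)
    (s d : (F × E) × C(I, E)) :
    fderiv ℝ (initialValueMap A) s d = (d.1, d.2 - ContinuousLinearMap.const ℝ I d.1.2 -
      curvePrimitive (velocityDeriv A A' s.1.1 s.2 (d.1.1, d.2))) := by
  let π : (F × E) × C(I, E) →L[ℝ] F × C(I, E) := (ContinuousLinearMap.fst ℝ F E).prodMap (.id ℝ _)
  have hintegral : HasFDerivAt (fun s => curvePrimitive (velocity A s.1.1 s.2)) _ s :=
    (curvePrimitive (E := E)).hasFDerivAt.comp s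
      ((hasFDerivAt_velocity hA (π s)).comp s π.hasFDerivAt)
  have hinitial : HasFDerivAt
      (fun s : (F × E) × C(I, E) => ContinuousLinearMap.const ℝ I s.1.2) _ s :=
    (ContinuousLinearMap.const ℝ I ∘L ContinuousLinearMap.snd ℝ F E ∘L
      ContinuousLinearMap.fst ℝ (F × E) C(I, E)).hasFDerivAt
  have hmap : HasFDerivAt (initialValueMap A) _ s := hasFDerivAt_fst.prodMk
    ((hasFDerivAt_snd.sub hinitial).sub hintegral)
  rw [hmap.fderiv]
  rfl

theorem exists_hasFDerivAt_equiv_initialValueMap (hA : ∀ x, HasFDerivAt A (A' x) x)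
    (hsmooth : ContDiff ℝ ∞ A) (y : E) (z : C(I, E)) :
    ∃ g : ((F × E) × C(I, E)) ≃L[ℝ] (F × E) × C(I, E),
      HasFDerivAt (initialValueMap A) (g : _ →L[ℝ] _) ((0, y), z) := by
  let c : (F × E) →L[ℝ] C(I, E) := (curvePrimitive ∘L pointwiseApply (A.comp z) ∘L
    ContinuousLinearMap.const ℝ I).coprod (ContinuousLinearMap.const ℝ I)
  refine ⟨(ContinuousLinearEquiv.refl ℝ _).skewProd (ContinuousLinearEquiv.refl ℝ _) (-c),
    ((contDiff_initialValueMap hsmooth).differentiable (by simp)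
      _).hasFDerivAt.congr_fderiv (ContinuousLinearMap.ext fun d => ?_)⟩
  rw [fderiv_initialValueMap_apply hA, velocityDeriv_zero_apply]
  refine Prod.ext rfl ?_
  change d.2 - ContinuousLinearMap.const ℝ I d.1.2 - curvePrimitive (velocity A d.1.1 z) =
    d.2 + -(curvePrimitive (velocity A d.1.1 z) + ContinuousLinearMap.const ℝ I d.1.2)
  abel

variable [CompleteSpace E]

-- `t • A (z t) k` is the variation of the solution `z` when `x` moves in the direction `k`: for
-- commuting fields, the flow of `A · (x + s • k)` is the flow of `A · x` followed by that of
-- `s • A · k`.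
theorem curvePrimitive_velocityDeriv (hA : ∀ x, HasFDerivAt A (A' x) x) {x : F} {y : E}
    {z b : C(I, E)} (hz : initialValueMap A ((x, y), z) = ((x, y), 0)) (k : F)
    (hcomm : ∀ t, A' (z t) (A (z t) x) k = A' (z t) (A (z t) k) x)
    (hb : ∀ t : I, b t = (t : ℝ) • A (z t) k) :
    curvePrimitive (velocityDeriv A A' x z (k, b)) = b := by
  have hz' : z - ContinuousLinearMap.const ℝ I y - curvePrimitive (velocity A x z) = 0 :=
    congrArg Prod.snd hz
  rw [sub_sub, sub_eq_zero] at hz'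
  obtain ⟨Z, hZ, hZz⟩ := exists_hasDerivAt_of_eq_const_add_curvePrimitive hz'
  have hZcont : Continuous Z := continuous_iff_continuousAt.2 fun t => (hZ t).continuousAt
  have hderiv : ∀ t : ℝ, HasDerivAt (fun t : ℝ => t • A (Z t) k)
      (t • A' (Z t) (curveExtend (velocity A x z) t) k + A (Z t) k) t := by
    intro t
    have hAZ : HasDerivAt (fun t => A (Z t) k) (A' (Z t) (curveExtend (velocity A x z) t) k) t := by
      simpa using ((hA (Z t)).comp_hasDerivAt t (hZ t)).clm_apply (hasDerivAt_const t k)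
    simpa using (hasDerivAt_id t).fun_smul hAZ
  refine curvePrimitive_eq_of_hasDerivAt hderiv (by fun_prop) (zero_smul ℝ _) (fun t => ?_)
    fun t => ?_
  · rw [velocityDeriv_apply, hZz, curveExtend_coe, velocity_apply, hcomm, hb, map_smul, add_comm]
    rfl
  · rw [hZz, hb]

theorem exists_contDiffOn_initialValueMap_eq [CompleteSpace F]
    (hA : ∀ x, HasFDerivAt A (A' x) x) (hsmooth : ContDiff ℝ ∞ A)
    {V : Set E} (hV : IsOpen V) {p : E} (hp : p ∈ V) :
    ∃ (O : Set (F × E)) (ζ : F × E → C(I, E)), IsOpen O ∧ (0, p) ∈ O ∧ ContDiffOn ℝ ∞ ζ O ∧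
      ∀ q ∈ O, (∀ t, ζ q t ∈ V) ∧ initialValueMap A (q, ζ q) = (q, 0) ∧
        Function.Injective (fderiv ℝ (initialValueMap A) (q, ζ q)) := by
  set s₀ : (F × E) × C(I, E) := ((0, p), ContinuousLinearMap.const ℝ I p)
  have hs₀ : initialValueMap A s₀ = ((0, p), 0) := by
    simp [initialValueMap, s₀, velocity_zero]
  obtain ⟨g₀, hg₀⟩ := exists_hasFDerivAt_equiv_initialValueMap hA hsmooth p
    (ContinuousLinearMap.const ℝ I p)
  have hopen : IsOpen {s : (F × E) × C(I, E) | Set.MapsTo s.2 Set.univ V} :=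
    (ContinuousMap.isOpen_setOfPred_mapsTo isCompact_univ hV).preimage continuous_snd
  obtain ⟨e, hes₀, heV, he, hesymm, hederiv⟩ := exists_local_diffeo hopen
    (contDiff_initialValueMap hsmooth).contDiffOn (a := s₀) (fun _ _ => hp) g₀ hg₀
  have hsection : ContDiff ℝ ∞ fun q : F × E => (q, (0 : C(I, E))) :=
    contDiff_id.prodMk contDiff_const
  refine ⟨(fun q => (q, 0)) ⁻¹' e.target, fun q => (e.symm (q, 0)).2,
    e.open_target.preimage hsection.continuous, ?_,
    contDiff_snd.comp_contDiffOn (hesymm.comp hsection.contDiffOn fun _ h => h), ?_⟩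
  · rw [Set.mem_preimage, ← hs₀, ← he]
    exact e.map_source hes₀
  · intro q (hq : (q, 0) ∈ e.target)
    have hsolution : initialValueMap A (e.symm (q, 0)) = (q, 0) := by
      rw [← he, e.right_inv hq]
    have hpair : (q, (e.symm (q, 0)).2) = e.symm (q, 0) :=
      Prod.ext (congrArg Prod.fst hsolution).symm rfl
    have hmem := e.map_target hq
    rw [hpair]
    obtain ⟨g, hg⟩ := hederiv _ hmem
    exact ⟨fun t => heV hmem (Set.mem_univ t), hsolution, hg.fderiv ▸ g.injective⟩

theorem fderiv_apply_of_initialValueMap_eq (hA : ∀ x, HasFDerivAt A (A' x) x)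
    {O : Set (F × E)} {ζ : F × E → C(I, E)} {q : F × E} (hO : O ∈ 𝓝 q)
    (hsolution : ∀ q ∈ O, initialValueMap A (q, ζ q) = (q, 0))
    (hζ : DifferentiableAt ℝ ζ q) (hsmooth : ContDiff ℝ ∞ A)
    (hinjective : Function.Injective (fderiv ℝ (initialValueMap A) (q, ζ q))) (k : F)
    (hcomm : ∀ t, A' (ζ q t) (A (ζ q t) q.1) k = A' (ζ q t) (A (ζ q t) k) q.1) (t : I) :
    fderiv ℝ ζ q (k, 0) t = (t : ℝ) • A (ζ q t) k := by
  let b : C(I, E) := ⟨fun t => (t : ℝ) • A (ζ q t) k, by fun_prop⟩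
  have hb : curvePrimitive (velocityDeriv A A' q.1 (ζ q) (k, b)) = b :=
    curvePrimitive_velocityDeriv hA (hsolution q (mem_of_mem_nhds hO)) k hcomm fun _ => rfl
  have hmap := ((contDiff_initialValueMap hsmooth).differentiable (by simp) (q, ζ q)).hasFDerivAt
  have hchain := hmap.comp q ((hasFDerivAt_id q).prodMk hζ.hasFDerivAt)
  have hconst : HasFDerivAt (fun q => initialValueMap A (q, ζ q))
      ((ContinuousLinearMap.id ℝ (F × E)).prod 0) q :=
    ((hasFDerivAt_id q).prodMk (hasFDerivAt_const 0 q)).congr_of_eventuallyEq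
      (Filter.eventually_of_mem hO hsolution)
  have hvariation : fderiv ℝ (initialValueMap A) (q, ζ q) ((k, 0), fderiv ℝ ζ q (k, 0)) =
      ((k, 0), 0) := DFunLike.congr_fun (hchain.unique hconst) (k, 0)
  have hcandidate : fderiv ℝ (initialValueMap A) (q, ζ q) ((k, 0), b) = ((k, 0), 0) := by
    simp [fderiv_initialValueMap_apply hA, hb]
  exact DFunLike.congr_fun
    (congrArg Prod.snd (hinjective (hvariation.trans hcandidate.symm))) t

theorem exists_commuting_flow [CompleteSpace F] (hA : ∀ x, HasFDerivAt A (A' x) x)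
    (hsmooth : ContDiff ℝ ∞ A) {V : Set E} (hV : IsOpen V) {p : E} (hp : p ∈ V)
    (hcomm : ∀ z ∈ V, ∀ h k, A' z (A z h) k = A' z (A z k) h) :
    ∃ (G : F × E → E) (O : Set (F × E)), IsOpen O ∧ (0, p) ∈ O ∧ ContDiffOn ℝ ∞ G O ∧
      Set.MapsTo G O V ∧ (∀ q ∈ O, ∀ k, fderiv ℝ G q (k, 0) = A (G q) k) ∧
      ∀ y, (0, y) ∈ O → G (0, y) = y := by
  obtain ⟨O, ζ, hO, hmem, hζ, hsol⟩ := exists_contDiffOn_initialValueMap_eq hA hsmooth hV hp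
  have hζd : ∀ q ∈ O, DifferentiableAt ℝ ζ q := fun q hq =>
    (hζ.contDiffAt (hO.mem_nhds hq)).differentiableAt (by simp)
  refine ⟨fun q => ζ q 1, O, hO, hmem,
    (ContinuousMap.evalCLM (M := E) ℝ (1 : I)).contDiff.comp_contDiffOn hζ,
    fun q hq => (hsol q hq).1 1,
    fun q hq k => ?_, fun y hy => ?_⟩
  · have heval : HasFDerivAt (fun q => ζ q 1)
        (ContinuousMap.evalCLM ℝ (1 : I) ∘L fderiv ℝ ζ q) q :=
      (ContinuousMap.evalCLM (M := E) ℝ (1 : I)).hasFDerivAt.comp q (hζd q hq).hasFDerivAt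
    rw [heval.fderiv]
    simpa using fderiv_apply_of_initialValueMap_eq hA (hO.mem_nhds hq)
      (fun q' hq' => (hsol q' hq').2.1) (hζd q hq) hsmooth (hsol q hq).2.2 k
      (fun t => hcomm _ ((hsol q hq).1 t) _ _) 1
  · have h := congrArg Prod.snd (hsol _ hy).2.1
    simp only [initialValueMap, velocity_zero, map_zero, sub_zero, sub_eq_zero] at h
    simp [h]

end Flow

theorem exists_contDiff_eqOn_nhds {E F : Type*} [NormedAddCommGroup E] [NormedSpace ℝ E]
    [HasContDiffBump E] [NormedAddCommGroup F] [NormedSpace ℝ F] {f : E → F} {U : Set E}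
    (hU : IsOpen U) (hf : ContDiffOn ℝ ∞ f U) {p : E} (hp : p ∈ U) :
    ∃ (g : E → F) (V : Set E), ContDiff ℝ ∞ g ∧ IsOpen V ∧ p ∈ V ∧ V ⊆ U ∧ Set.EqOn g f V := by
  obtain ⟨R, hR, hRU⟩ := Metric.isOpen_iff.1 hU p hp
  let b : ContDiffBump p := ⟨R / 4, R / 2, by positivity, by linarith⟩
  have hsupport : tsupport b ⊆ U := by
    rw [b.tsupport_eq]
    exact (Metric.closedBall_subset_ball (by change R / 2 < R; linarith)).trans hRU
  refine ⟨fun x => b x • f x, Metric.ball p (R / 4), contDiff_iff_contDiffAt.2 fun x => ?_,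
    Metric.isOpen_ball, Metric.mem_ball_self (by positivity),
    (Metric.ball_subset_ball (by linarith)).trans hRU, fun x hx => ?_⟩
  · by_cases hx : x ∈ U
    · exact b.contDiffAt.smul (hf.contDiffAt (hU.mem_nhds hx))
    · refine contDiffAt_const (c := 0) |>.congr_of_eventuallyEq ?_
      filter_upwards [(isClosed_tsupport b).isOpen_compl.mem_nhds fun h => hx (hsupport h)]
        with y hy
      rw [image_eq_zero_of_notMem_tsupport hy, zero_smul]
  · simp [b.one_of_mem_closedBall (Metric.ball_subset_closedBall hx)]

section Idempotent

variable {R : Type*} [Ring R] {e f a : R}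

/-- The canonical element `f e + (1 - f) (1 - e)`, which carries the range of the idempotent `e`
to that of the idempotent `f` and is invertible when `e` is close to `f`. -/
def intertwiner (e f : R) : R := f * e + (1 - f) * (1 - e)

theorem intertwiner_mul (he : IsIdempotentElem e) : intertwiner e f * e = f * e := by
  rw [intertwiner, add_mul, mul_assoc, he.eq, mul_assoc, he.one_sub_mul_self, mul_zero, add_zero]

theorem mul_intertwiner (hf : IsIdempotentElem f) : f * intertwiner e f = f * e := by
  rw [intertwiner, mul_add, ← mul_assoc, hf.eq, ← mul_assoc, hf.mul_one_sub_self, zero_mul,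
    add_zero]

theorem intertwiner_self (he : IsIdempotentElem e) : intertwiner e e = 1 := by
  rw [intertwiner, he.eq, he.one_sub.eq, add_sub_cancel]

/-- `a` inverts the projection `f`, restricted to a map from the range of `e` to that of `f`. As
`e` varies, `a` is a frame of the ranges of `e` parametrised by the fixed range of `f`. -/
structure IsRangeInverse (e f a : R) : Prop where
  left_mul : e * a = a
  mul_left : a * e = e
  right_mul : f * a = f
  mul_right : a * f = a

theorem isRangeInverse_inverse_intertwiner_mul (he : IsIdempotentElem e)
    (hf : IsIdempotentElem f) (hunit : IsUnit (intertwiner e f)) :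
    IsRangeInverse e f (Ring.inverse (intertwiner e f) * f) := by
  have hleft := Ring.inverse_mul_cancel _ hunit
  have hright := Ring.mul_inverse_cancel _ hunit
  set t := intertwiner e f
  have hcomm : Ring.inverse t * f = e * Ring.inverse t := by
    calc Ring.inverse t * f = Ring.inverse t * (f * t) * Ring.inverse t := by
          rw [mul_assoc, mul_assoc, hright, mul_one]
      _ = Ring.inverse t * (t * e) * Ring.inverse t := by
          rw [mul_intertwiner hf, intertwiner_mul he]
      _ = e * Ring.inverse t := by rw [← mul_assoc, hleft, one_mul]
  refine ⟨?_, ?_, ?_, ?_⟩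
  · rw [hcomm, ← mul_assoc, he.eq]
  · rw [mul_assoc, ← intertwiner_mul he, ← mul_assoc, hleft, one_mul]
  · rw [hcomm, ← mul_assoc, ← mul_intertwiner hf, mul_assoc, hright, mul_one]
  · rw [mul_assoc, hf.eq]

end Idempotent

section Frobenius

section Involutive

variable {𝕜 E : Type*} [NontriviallyNormedField 𝕜] [NormedAddCommGroup E] [NormedSpace 𝕜 E]

/-- Involutivity at `z` of the distribution `x ↦ range (P x)`, for a family `P` of projections:
extending `u` and `v` to the fields `P · u` and `P · v`, it says that their Lie bracket at `z`
vanishes. -/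
def IsInvolutiveAt (P : E → E →L[𝕜] E) (z : E) : Prop :=
  ∀ u v, P z u = u → P z v = v → fderiv 𝕜 P z u v = fderiv 𝕜 P z v u

variable {P A : E → E →L[𝕜] E} {Q : E →L[𝕜] E} {z : E}

theorem fderiv_mul_apply_apply {S T : E → E →L[𝕜] E} (hS : DifferentiableAt 𝕜 S z)
    (hT : DifferentiableAt 𝕜 T z) (w v : E) :
    fderiv 𝕜 (fun x => S x * T x) z w v = S z (fderiv 𝕜 T z w v) + fderiv 𝕜 S z w (T z v) :=
  congrArg (fun B : E →L[𝕜] E →L[𝕜] E => B w v) (fderiv_clm_comp hS hT)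

theorem IsRangeInverse.apply_eq_zero {a e f : E →L[𝕜] E} (ha : IsRangeInverse e f a) {x : E}
    (he : e x = x) (hf : f x = 0) : x = 0 :=
  calc x = (a * f * e) x := by rw [ha.mul_right, ha.mul_left, he]
    _ = a (f (e x)) := rfl
    _ = 0 := by rw [he, hf, map_zero]

-- The bracket of two fields of the frame is tangent to the distribution, by involutivity, and is
-- killed by `Q`, because `Q * A` is constant.
theorem IsInvolutiveAt.fderiv_frame_symm (hP : DifferentiableAt 𝕜 P z)
    (hA : DifferentiableAt 𝕜 A z) (hinvol : IsInvolutiveAt P z)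
    (hframe : ∀ᶠ w in 𝓝 z, IsRangeInverse (P w) Q (A w)) (h k : E) :
    fderiv 𝕜 A z (A z h) k = fderiv 𝕜 A z (A z k) h := by
  have hrange : ∀ w k, fderiv 𝕜 A z w k - P z (fderiv 𝕜 A z w k) = fderiv 𝕜 P z w (A z k) := by
    intro w k
    have hPA : (fun x => P x * A x) =ᶠ[𝓝 z] A := hframe.mono fun _ h => h.left_mul
    rw [sub_eq_iff_eq_add', ← fderiv_mul_apply_apply hP hA, hPA.fderiv_eq]
  have hkernel : ∀ w k, Q (fderiv 𝕜 A z w k) = 0 := by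
    intro w k
    have hQA : (fun x => Q * A x) =ᶠ[𝓝 z] fun _ => Q := hframe.mono fun _ h => h.right_mul
    simpa [hQA.fderiv_eq] using (fderiv_mul_apply_apply (differentiableAt_const Q) hA w k).symm
  have hPA : ∀ k, P z (A z k) = A z k := DFunLike.congr_fun hframe.self_of_nhds.left_mul
  rw [← sub_eq_zero]
  refine hframe.self_of_nhds.apply_eq_zero (sub_eq_zero.1 ?_).symm
    (by rw [map_sub, hkernel, hkernel, sub_self])
  rw [map_sub, sub_sub_sub_comm, hrange, hrange, hinvol _ _ (hPA h) (hPA k), sub_self]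

end Involutive

section Frame

variable {E : Type*} [NormedAddCommGroup E] [NormedSpace ℝ E] [CompleteSpace E]
  {P : E → E →L[ℝ] E} {U : Set E}

theorem exists_contDiff_isRangeInverse [HasContDiffBump E] (hU : IsOpen U)
    (hP : ContDiffOn ℝ ∞ P U) (hproj : ∀ z ∈ U, IsIdempotentElem (P z)) {p : E} (hp : p ∈ U) :
    ∃ (A : E → E →L[ℝ] E) (V : Set E), ContDiff ℝ ∞ A ∧ IsOpen V ∧ p ∈ V ∧ V ⊆ U ∧
      ∀ z ∈ V, IsRangeInverse (P z) (P p) (A z) := by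
  have hsmooth : ContDiffOn ℝ ∞ (fun z => intertwiner (P z) (P p)) U :=
    (contDiffOn_const.mul hP).add (contDiffOn_const.mul (contDiffOn_const.sub hP))
  set U' := U ∩ (fun z => intertwiner (P z) (P p)) ⁻¹' {T | IsUnit T}
  have hU' : IsOpen U' := hsmooth.continuousOn.isOpen_inter_preimage hU Units.isOpen
  have hpU' : p ∈ U' := ⟨hp, by
    rw [Set.mem_preimage, intertwiner_self (hproj p hp)]
    exact isUnit_one⟩
  have hinverse : ContDiffOn ℝ ∞ (fun z => Ring.inverse (intertwiner (P z) (P p)) * P p) U' := by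
    rintro z ⟨hz, w, hw : (w : E →L[ℝ] E) = intertwiner (P z) (P p)⟩
    have hw' : ContDiffAt ℝ ∞ Ring.inverse (intertwiner (P z) (P p)) :=
      hw ▸ contDiffAt_ringInverse ℝ w
    exact ((hw'.comp z (hsmooth.contDiffAt (hU.mem_nhds hz))).mul
      contDiffAt_const).contDiffWithinAt
  obtain ⟨A, V, hA, hV, hpV, hVU, hAeq⟩ := exists_contDiff_eqOn_nhds hU' hinverse hpU'
  refine ⟨A, V, hA, hV, hpV, hVU.trans Set.inter_subset_left, fun z hz => ?_⟩
  rw [hAeq hz]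
  exact isRangeInverse_inverse_intertwiner_mul (hproj z (hVU hz).1) (hproj p hp) (hVU hz).2

theorem exists_straightening {A : C(E, E →L[ℝ] E)} {A' : C(E, E →L[ℝ] E →L[ℝ] E)}
    (hA : ∀ x, HasFDerivAt A (A' x) x) (hsmooth : ContDiff ℝ ∞ A) {V : Set E} (hV : IsOpen V)
    {p : E} (hp : p ∈ V) (hcomm : ∀ z ∈ V, ∀ h k, A' z (A z h) k = A' z (A z k) h)
    {Q : E →L[ℝ] E} (hQ : IsIdempotentElem Q) (hAp : A p * Q = Q) :
    ∃ (Θ : E → E) (O : Set E), IsOpen O ∧ 0 ∈ O ∧ ContDiffOn ℝ ∞ Θ O ∧ Set.MapsTo Θ O V ∧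
      Θ 0 = p ∧ HasFDerivAt Θ (1 : E →L[ℝ] E) 0 ∧
      ∀ u ∈ O, ∀ k, fderiv ℝ Θ u (Q k) = A (Θ u) (Q k) := by
  obtain ⟨G, O, hO, hpO, hG, hGV, hGx, hG0⟩ := exists_commuting_flow hA hsmooth hV hp hcomm
  have hGd : ∀ q ∈ O, HasFDerivAt G (fderiv ℝ G q) q := fun q hq =>
    ((hG.contDiffAt (hO.mem_nhds hq)).differentiableAt (by simp)).hasFDerivAt
  have hGy : ∀ k, fderiv ℝ G (0, p) (0, k) = k := by
    have hslice : (fun y => G (0, y)) =ᶠ[𝓝 p] id :=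
      eventually_of_mem ((hO.preimage (Continuous.prodMk_right (0 : E))).mem_nhds hpO) hG0
    exact DFunLike.congr_fun (((hGd _ hpO).comp p (hasFDerivAt_prodMk_right 0 p)).unique
      ((hasFDerivAt_id p).congr_of_eventuallyEq hslice))
  let j : E → E × E := fun u => (Q u, p + (1 - Q) u)
  have hj : ContDiff ℝ ∞ j := Q.contDiff.prodMk (contDiff_const.add (1 - Q : E →L[ℝ] E).contDiff)
  have hj0 : j 0 = (0, p) := by simp [j]
  have h0 : j 0 ∈ O := hj0 ▸ hpO
  have hΘ : ∀ u, j u ∈ O →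
      HasFDerivAt (G ∘ j) (fderiv ℝ G (j u) ∘L Q.prod (1 - Q)) u := fun u hu =>
    (hGd _ hu).comp u (Q.hasFDerivAt.prodMk ((1 - Q : E →L[ℝ] E).hasFDerivAt.const_add p))
  refine ⟨G ∘ j, j ⁻¹' O, hO.preimage hj.continuous, h0, hG.comp hj.contDiffOn fun _ h => h,
    fun u hu => hGV hu, by simp [hj0, hG0 p hpO], ?_, fun u hu k => ?_⟩
  · refine (hΘ 0 h0).congr_fderiv (ContinuousLinearMap.ext fun w => ?_)
    rw [hj0]
    calc fderiv ℝ G (0, p) (Q w, (1 - Q) w)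
        = fderiv ℝ G (0, p) (Q w, 0) + fderiv ℝ G (0, p) (0, (1 - Q) w) := by
          rw [← map_add, Prod.mk_add_mk, add_zero, zero_add]
      _ = (A p * Q) w + (1 - Q) w := by rw [hGx _ hpO, hGy, hG0 p hpO]; rfl
      _ = w := by rw [hAp]; exact add_sub_cancel (Q w) w
  · have hQQ : (Q.prod (1 - Q)) (Q k) = (Q k, 0) :=
      Prod.ext (DFunLike.congr_fun hQ.eq k) (DFunLike.congr_fun hQ.one_sub_mul_self k)
    rw [(hΘ u hu).fderiv, ContinuousLinearMap.comp_apply, hQQ, hGx _ hu]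
    rfl

theorem exists_flow_box [HasContDiffBump E] (hU : IsOpen U) (hP : ContDiffOn ℝ ∞ P U)
    (hproj : ∀ z ∈ U, IsIdempotentElem (P z)) (hinvol : ∀ z ∈ U, IsInvolutiveAt P z)
    {p : E} (hp : p ∈ U) :
    ∃ e : OpenPartialHomeomorph E E, 0 ∈ e.source ∧ e 0 = p ∧ e.target ⊆ U ∧
      ContDiffOn ℝ ∞ e.symm e.target ∧ HasFDerivAt e (1 : E →L[ℝ] E) 0 ∧
      ∀ u ∈ e.source, ∃ g : E ≃L[ℝ] E, HasFDerivAt e (g : E →L[ℝ] E) u ∧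
        ∀ v, P (e u) v = v → P p (g.symm v) = g.symm v := by
  have hPp := hproj p hp
  obtain ⟨A, V, hA, hV, hpV, hVU, hframe⟩ := exists_contDiff_isRangeInverse hU hP hproj hp
  have hA' := hA.differentiable (by simp)
  have hcomm : ∀ z ∈ V, ∀ h k, fderiv ℝ A z (A z h) k = fderiv ℝ A z (A z k) h := fun z hz =>
    (hinvol z (hVU hz)).fderiv_frame_symm ((hP.contDiffAt
      (hU.mem_nhds (hVU hz))).differentiableAt (by simp)) (hA' z)
      (eventually_of_mem (hV.mem_nhds hz) hframe)
  have hAp : A p * P p = P p := (hframe p hpV).mul_left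
  obtain ⟨Θ, O, hO, h0, hΘ, hΘV, hΘ0, hΘ0', hΘQ⟩ := exists_straightening (A := ⟨A, hA.continuous⟩)
    (A' := ⟨fderiv ℝ A, hA.continuous_fderiv (by simp)⟩) (fun x => (hA' x).hasFDerivAt)
    hA hV hpV hcomm hPp hAp
  obtain ⟨e, he0, heO, he, hesymm, heinv⟩ := exists_local_diffeo hO hΘ h0
    (ContinuousLinearEquiv.refl ℝ E) hΘ0'
  obtain rfl : ⇑e = Θ := funext he
  refine ⟨e, he0, hΘ0, fun z hz => ?_, hesymm, hΘ0', fun u hu => ?_⟩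
  · rw [← e.right_inv hz]
    exact hVU (hΘV (heO (e.map_target hz)))
  · obtain ⟨g, hg⟩ := heinv u hu
    refine ⟨g, hg, fun v hv => ?_⟩
    have hgv : g (P p v) = v :=
      calc g (P p v) = fderiv ℝ e u (P p v) := by rw [hg.fderiv]; rfl
        _ = (A (e u) * P p) v := hΘQ u (heO hu) v
        _ = (A (e u) * P (e u)) v := by
          rw [(hframe _ (hΘV (heO hu))).mul_right, mul_apply_eq_comp, hv]
        _ = v := by rw [(hframe _ (hΘV (heO hu))).mul_left, hv]
    rw [show g.symm v = P p v from g.symm_apply_eq.2 hgv.symm]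
    exact DFunLike.congr_fun hPp.eq v

theorem exists_first_integrals [HasContDiffBump E] (hU : IsOpen U) (hP : ContDiffOn ℝ ∞ P U)
    (hproj : ∀ z ∈ U, IsIdempotentElem (P z)) (hinvol : ∀ z ∈ U, IsInvolutiveAt P z)
    {p : E} (hp : p ∈ U) :
    ∃ (f : E → E) (V : Set E), IsOpen V ∧ p ∈ V ∧ V ⊆ U ∧ ContDiffOn ℝ ∞ f V ∧
      (∀ z ∈ V, fderiv ℝ f z * P z = 0) ∧ (∀ z ∈ V, P p * fderiv ℝ f z = 0) ∧
      fderiv ℝ f p = 1 - P p := by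
  obtain ⟨e, he0, hep, heU, hesymm, he0', hederiv⟩ := exists_flow_box hU hP hproj hinvol hp
  have hpt : p ∈ e.target := hep ▸ e.map_source he0
  have hderiv : ∀ z ∈ e.target, fderiv ℝ (fun z => (1 - P p) (e.symm z)) z =
      (1 - P p) * fderiv ℝ e.symm z := fun z hz =>
    ((1 - P p : E →L[ℝ] E).hasFDerivAt.comp z ((hesymm.contDiffAt
      (e.open_target.mem_nhds hz)).differentiableAt (by simp)).hasFDerivAt).fderiv
  refine ⟨fun z => (1 - P p) (e.symm z), e.target, e.open_target, hpt, heU,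
    (1 - P p : E →L[ℝ] E).contDiff.comp_contDiffOn hesymm, fun z hz => ?_, fun z hz => ?_, ?_⟩
  · obtain ⟨g, hg, hgP⟩ := hederiv _ (e.map_target hz)
    rw [e.right_inv hz] at hgP
    rw [hderiv z hz, (e.hasFDerivAt_symm hz hg).fderiv]
    ext v
    exact sub_eq_zero.2 (hgP (P z v) (DFunLike.congr_fun (hproj z (heU hz)).eq v)).symm
  · rw [hderiv z hz, ← mul_assoc, (hproj p hp).mul_one_sub_self, zero_mul]
  · have hsymm : HasFDerivAt e.symm ((ContinuousLinearEquiv.refl ℝ E).symm : E →L[ℝ] E) p :=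
      e.hasFDerivAt_symm hpt (by rwa [← hep, e.left_inv he0])
    rw [hderiv p hpt, hsymm.fderiv]
    exact mul_one _

end Frame

end Frobenius

theorem semiconjBy_aeval {R A : Type*} [CommSemiring R] [Semiring A] [Algebra R A] {t a b : A}
    (h : SemiconjBy t a b) (p : R[X]) : SemiconjBy t (aeval a p) (aeval b p) := by
  induction p using Polynomial.induction_on' with
  | add p q hp hq => simpa only [map_add] using hp.add_right hq
  | monomial n c =>
    simp only [aeval_monomial]
    exact SemiconjBy.mul_right (Algebra.commute_algebraMap_right c t) (h.pow_right n)

section SpectralProjection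

variable {R A : Type*} [CommRing R] [Ring A] [Algebra R A] {a e : A} {p q : R[X]}

/-- `e` is the spectral projection of `a` onto `ker p(a)` along `ker q(a)`, where `p` and `q` are
coprime. That `e` is an idempotent commuting with `a` is a consequence. -/
structure IsSpectralProj (a e : A) (p q : R[X]) : Prop where
  isCoprime : IsCoprime p q
  aeval_mul : aeval a p * e = 0
  aeval_mul_one_sub : aeval a q * (1 - e) = 0

namespace IsSpectralProj

theorem compl (h : IsSpectralProj a e p q) : IsSpectralProj a (1 - e) q p :=
  ⟨h.isCoprime.symm, h.aeval_mul_one_sub, by rw [sub_sub_cancel, h.aeval_mul]⟩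

theorem exists_eq_aeval (h : IsSpectralProj a e p q) : ∃ s : R[X], e = aeval a s ∧ q ∣ s := by
  obtain ⟨u, v, huv⟩ := h.isCoprime
  refine ⟨v * q, ?_, Dvd.intro_left v rfl⟩
  calc e = aeval a (u * p + v * q) * e := by rw [huv, map_one, one_mul]
    _ = aeval a u * (aeval a p * e) + aeval a (v * q) * e := by
      rw [map_add, add_mul, map_mul, mul_assoc]
    _ = aeval a (v * q) * e + aeval a v * (aeval a q * (1 - e)) := by
      rw [h.aeval_mul, h.aeval_mul_one_sub, mul_zero, mul_zero, zero_add, add_zero]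
    _ = aeval a (v * q) := by
      rw [← mul_assoc, ← map_mul, ← mul_add, add_sub_cancel, mul_one]

theorem isIdempotentElem (h : IsSpectralProj a e p q) : IsIdempotentElem e := by
  obtain ⟨s, hs, q', rfl⟩ := h.exists_eq_aeval
  have hzero : e * (1 - e) = 0 := by
    nth_rewrite 1 [hs]
    rw [mul_comm, map_mul, mul_assoc, h.aeval_mul_one_sub, mul_zero]
  rwa [mul_sub, mul_one, sub_eq_zero, eq_comm] at hzero

theorem semiconjBy (h : IsSpectralProj a e p q) {t : A} (ht : SemiconjBy t a a) :
    SemiconjBy t e e := by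
  obtain ⟨s, rfl, -⟩ := h.exists_eq_aeval
  exact semiconjBy_aeval ht s

theorem commute (h : IsSpectralProj a e p q) : Commute e a :=
  (h.semiconjBy (Commute.refl a)).symm

theorem conj (h : IsSpectralProj a e p q) {t b f : A} (ht : IsUnit t) (hab : SemiconjBy t a b)
    (hef : SemiconjBy t e f) : IsSpectralProj b f p q where
  isCoprime := h.isCoprime
  aeval_mul := ht.mul_left_eq_zero.1 <| by
    rw [← ((semiconjBy_aeval hab p).mul_right hef).eq, h.aeval_mul, mul_zero]
  aeval_mul_one_sub := ht.mul_left_eq_zero.1 <| by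
    rw [← ((semiconjBy_aeval hab q).mul_right ((SemiconjBy.one_right t).sub_right hef)).eq,
      h.aeval_mul_one_sub, mul_zero]

theorem map {B : Type*} [Ring B] [Algebra R B] (h : IsSpectralProj a e p q) (φ : A →ₐ[R] B) :
    IsSpectralProj (φ a) (φ e) p q where
  isCoprime := h.isCoprime
  aeval_mul := by rw [aeval_algHom_apply, ← map_mul, h.aeval_mul, map_zero]
  aeval_mul_one_sub := by
    rw [aeval_algHom_apply, ← map_one φ, ← map_sub, ← map_mul, h.aeval_mul_one_sub, map_zero]

end IsSpectralProj

/-- A formula for the spectral projection of `a` onto `ker p(a)` along `ker q(a)` which depends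
smoothly on `a`, `p` and `q`, unlike one by Bézout coefficients. It is meaningful when `p` and `q`
are coprime and `(p q)(a) = 0`. -/
def spectralProj (a : A) (p q : R[X]) : A := aeval a q * Ring.inverse (aeval a p + aeval a q)

-- If `u p + v q = 1`, then `u² p + v² q` inverts `p + q` modulo `p q`.
theorem isUnit_aeval_add_of_isCoprime (hpq : IsCoprime p q) (h0 : aeval a (p * q) = 0) :
    IsUnit (aeval a p + aeval a q) := by
  obtain ⟨u, v, huv⟩ := hpq
  have hinverse : aeval a ((p + q) * (u ^ 2 * p + v ^ 2 * q)) = 1 := by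
    rw [show (p + q) * (u ^ 2 * p + v ^ 2 * q) =
      (u * p + v * q) ^ 2 + (u - v) ^ 2 * (p * q) by ring, huv, map_add, map_mul, h0, mul_zero,
      add_zero, one_pow, map_one]
  refine ⟨⟨_, aeval a (u ^ 2 * p + v ^ 2 * q), ?_, ?_⟩, rfl⟩
  · rw [← map_add, ← map_mul, hinverse]
  · rw [← map_add, ← map_mul, mul_comm, hinverse]

theorem isSpectralProj_spectralProj (hpq : IsCoprime p q) (h0 : aeval a (p * q) = 0) :
    IsSpectralProj a (spectralProj a p q) p q where
  isCoprime := hpq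
  aeval_mul := by rw [spectralProj, ← mul_assoc, ← map_mul, h0, zero_mul]
  aeval_mul_one_sub := by
    rw [spectralProj, ← Ring.mul_inverse_cancel _ (isUnit_aeval_add_of_isCoprime hpq h0), ← sub_mul,
      add_sub_cancel_right, ← mul_assoc, ← map_mul, mul_comm q, h0, zero_mul]

end SpectralProjection

section SmoothSpectralProjection

variable {𝕜 E A : Type*} [NontriviallyNormedField 𝕜] [NormedAddCommGroup E] [NormedSpace 𝕜 E]
  [NormedRing A] [NormedAlgebra 𝕜 A] {a : E → A} {p q : E → 𝕜[X]} {U : Set E} {d : ℕ}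
  {n : WithTop ℕ∞}

theorem contDiffOn_aeval (ha : ContDiffOn 𝕜 n a U)
    (hp : ∀ k, ContDiffOn 𝕜 n (fun x => (p x).coeff k) U) (hd : ∀ x ∈ U, (p x).natDegree < d) :
    ContDiffOn 𝕜 n (fun x => aeval (a x) (p x)) U := by
  refine ContDiffOn.congr (f := fun x => ∑ k ∈ Finset.range d, (p x).coeff k • a x ^ k) ?_
    fun x hx => aeval_eq_sum_range' (hd x hx) _
  exact ContDiffOn.sum fun k _ => (hp k).smul (ha.pow k)

theorem contDiffOn_spectralProj [CompleteSpace A] (ha : ContDiffOn 𝕜 n a U)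
    (hp : ∀ k, ContDiffOn 𝕜 n (fun x => (p x).coeff k) U)
    (hq : ∀ k, ContDiffOn 𝕜 n (fun x => (q x).coeff k) U)
    (hpd : ∀ x ∈ U, (p x).natDegree < d) (hqd : ∀ x ∈ U, (q x).natDegree < d)
    (hpq : ∀ x ∈ U, IsCoprime (p x) (q x)) (h0 : ∀ x ∈ U, aeval (a x) (p x * q x) = 0) :
    ContDiffOn 𝕜 n (fun x => spectralProj (a x) (p x) (q x)) U := by
  have hq' := contDiffOn_aeval ha hq hqd
  refine hq'.mul fun x hx => ?_
  obtain ⟨w, hw⟩ := isUnit_aeval_add_of_isCoprime (hpq x hx) (h0 x hx)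
  have hinverse : ContDiffAt 𝕜 n Ring.inverse (aeval (a x) (p x) + aeval (a x) (q x)) :=
    hw ▸ contDiffAt_ringInverse 𝕜 w
  exact hinverse.comp_contDiffWithinAt x ((contDiffOn_aeval ha hp hpd).add hq' x hx)

end SmoothSpectralProjection

section NijenhuisOperator

variable {𝕜 E : Type*} [NontriviallyNormedField 𝕜] [NormedAddCommGroup E] [NormedSpace 𝕜 E]

section InvariantSubspaces

variable {L P : E →L[𝕜] E} {p q : 𝕜[X]}

theorem eq_zero_of_aeval_apply_eq_zero (hpq : IsCoprime p q) {w : E} (hp : aeval L p w = 0)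
    (hq : aeval L q w = 0) : w = 0 := by
  obtain ⟨u, v, huv⟩ := hpq
  calc w = aeval L (u * p + v * q) w := by rw [huv, map_one, one_apply_eq_self]
    _ = aeval L u (aeval L p w) + aeval L v (aeval L q w) := by rw [map_add, map_mul, map_mul]; rfl
    _ = 0 := by rw [hp, hq, map_zero, map_zero, add_zero]

namespace IsSpectralProj

theorem aeval_apply_eq_zero_iff (h : IsSpectralProj L P p q) {w : E} :
    aeval L p w = 0 ↔ P w = w := by
  have hp : aeval L p (P w) = 0 := DFunLike.congr_fun h.aeval_mul w
  have hq : aeval L q (w - P w) = 0 := DFunLike.congr_fun h.aeval_mul_one_sub w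
  refine ⟨fun hw => ?_, fun hw => by rwa [hw] at hp⟩
  have hp' : aeval L p (w - P w) = 0 := by rw [map_sub, hw, hp, sub_zero]
  exact (sub_eq_zero.1 (eq_zero_of_aeval_apply_eq_zero h.isCoprime hp' hq)).symm

theorem apply_apply (h : IsSpectralProj L P p q) (w : E) : P (L w) = L (P w) :=
  DFunLike.congr_fun h.commute.eq w

theorem eq_zero_of_intertwines (h : IsSpectralProj L P p q) {C : E →L[𝕜] E}
    (hCL : ∀ u, P u = u → C (L u) = L (C u)) (hPC : ∀ u, P u = u → P (C u) = 0) {u : E}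
    (hu : P u = u) : C u = 0 := by
  have hP : ∀ v, P (P v) = P v := DFunLike.congr_fun h.isIdempotentElem.eq
  have hsemiconj : SemiconjBy (C * P) L L := ContinuousLinearMap.ext fun v => by
    calc C (P (L v)) = C (L (P v)) := by rw [h.apply_apply]
      _ = L (C (P v)) := hCL _ (hP v)
  calc C u = C (P (P u)) := by rw [hu, hu]
    _ = P (C (P u)) := DFunLike.congr_fun (h.semiconjBy hsemiconj).eq u
    _ = 0 := by rw [hu, hPC u hu]

-- By coprimality, an operator intertwining `L` on `range P` with `L` on `ker P` vanishes. This
-- applies first to `u ↦ L (B v u) - B (L v) u` and then, by antisymmetry, to `B v` itself.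
theorem eq_zero_of_antisymm (h : IsSpectralProj L P p q) {B : E →L[𝕜] E →L[𝕜] E}
    (hanti : ∀ u v, B u v = -B v u) (hPB : ∀ u v, P u = u → P v = v → P (B u v) = 0)
    (hBL : ∀ u v, P u = u → P v = v →
      L (L (B u v)) - L (B u (L v)) - L (B (L u) v) + B (L u) (L v) = 0)
    {u v : E} (hu : P u = u) (hv : P v = v) : B u v = 0 := by
  have hPL : ∀ w, P w = w → P (L w) = L w := fun w hw => by rw [h.apply_apply, hw]
  have hleft : ∀ u v, P u = u → P v = v → B (L u) v = L (B u v) := by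
    intro u v hu hv
    refine (sub_eq_zero.1 (h.eq_zero_of_intertwines (C := L * B u - B (L u))
      (fun v hv => ?_) (fun v hv => ?_) hv)).symm
    · change L (B u (L v)) - B (L u) (L v) = L (L (B u v) - B (L u) v)
      rw [← sub_eq_zero, ← neg_eq_zero, ← hBL u v hu hv, map_sub]
      abel
    · change P (L (B u v) - B (L u) v) = 0
      rw [map_sub, h.apply_apply, hPB u v hu hv, hPB _ v (hPL u hu) hv, map_zero, sub_zero]
  refine h.eq_zero_of_intertwines (fun v hv => ?_) (fun v hv => hPB u v hu hv) hv
  rw [hanti, hleft v u hv hu, hanti v u, map_neg, neg_neg]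

end IsSpectralProj

end InvariantSubspaces

/-- The Nijenhuis torsion of the operator field `L` at `z`, evaluated on the constant vector fields
`u` and `v`; being tensorial, it is determined by these values. -/
def torsion (L : E → E →L[𝕜] E) (z u v : E) : E :=
  L z (fderiv 𝕜 L z v u) - L z (fderiv 𝕜 L z u v) + fderiv 𝕜 L z (L z u) v
    - fderiv 𝕜 L z (L z v) u

theorem fderiv_apply_comm {S T : E → E →L[𝕜] E} {z : E} (hS : DifferentiableAt 𝕜 S z)
    (hT : DifferentiableAt 𝕜 T z) (hST : ∀ᶠ x in 𝓝 z, Commute (S x) (T x)) (w v : E) :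
    S z (fderiv 𝕜 T z w v) + fderiv 𝕜 S z w (T z v)
      = T z (fderiv 𝕜 S z w v) + fderiv 𝕜 T z w (S z v) := by
  have heq : (fun x => S x * T x) =ᶠ[𝓝 z] fun x => T x * S x := hST
  rw [← fderiv_mul_apply_apply hS hT, heq.fderiv_eq, fderiv_mul_apply_apply hT hS]

theorem apply_fderiv_apply_eq_zero {P : E → E →L[𝕜] E} {z : E} (hP : DifferentiableAt 𝕜 P z)
    (hidem : ∀ᶠ x in 𝓝 z, IsIdempotentElem (P x)) (w : E) {v : E} (hv : P z v = v) :
    P z (fderiv 𝕜 P z w v) = 0 := by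
  have heq : (fun x => P x * P x) =ᶠ[𝓝 z] P := hidem
  have hproduct := fderiv_mul_apply_apply hP hP w v
  rwa [heq.fderiv_eq, hv, right_eq_add] at hproduct

-- The bracket of two fields in `range P` deviates from `range P` by an antisymmetric tensor `B`.
-- Modulo `range P`, the torsion expresses that `B` satisfies the torsion identity itself.
theorem isInvolutiveAt_of_torsion_eq_zero {L P : E → E →L[𝕜] E} {p q : E → 𝕜[X]} {z : E}
    (hL : DifferentiableAt 𝕜 L z) (hP : DifferentiableAt 𝕜 P z)
    (hspec : ∀ᶠ x in 𝓝 z, IsSpectralProj (L x) (P x) (p x) (q x))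
    (htor : ∀ u v, torsion L z u v = 0) : IsInvolutiveAt P z := by
  intro u v hu hv
  have h := hspec.self_of_nhds
  have hPDP : ∀ w {v}, P z v = v → P z (fderiv 𝕜 P z w v) = 0 :=
    apply_fderiv_apply_eq_zero hP (hspec.mono fun _ h => h.isIdempotentElem)
  have hPDL : ∀ w v, P z v = v → P z (fderiv 𝕜 L z w v)
      = L z (fderiv 𝕜 P z w v) + fderiv 𝕜 L z w v - fderiv 𝕜 P z w (L z v) := by
    intro w v hv
    rw [eq_sub_iff_add_eq, fderiv_apply_comm hP hL (hspec.mono fun _ h => h.commute), hv]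
  let B : E →L[𝕜] E →L[𝕜] E := fderiv 𝕜 P z - (fderiv 𝕜 P z).flip
  have hB : ∀ u v, B u v = fderiv 𝕜 P z u v - fderiv 𝕜 P z v u := fun u v => rfl
  refine sub_eq_zero.1 (h.eq_zero_of_antisymm (B := B) (fun u v => ?_) (fun u v hu hv => ?_)
    (fun u v hu hv => ?_) hu hv)
  · rw [hB, hB, neg_sub]
  · rw [hB, map_sub, hPDP u hv, hPDP v hu, sub_zero]
  · have hPtor := congrArg (P z) (htor u v)
    rw [map_zero, ← htor u v] at hPtor
    simp only [torsion, map_add, map_sub, h.apply_apply, hPDL _ _ hu, hPDL _ _ hv] at hPtor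
    simp only [hB, map_sub]
    rw [← sub_eq_zero.2 hPtor.symm]
    abel

theorem fderiv_apply_eq_zero_of_torsion_eq_zero {L : E → E →L[𝕜] E} {Q : E →L[𝕜] E}
    {p q : E → 𝕜[X]} {z : E} (hL : DifferentiableAt 𝕜 L z)
    (hspec : ∀ᶠ x in 𝓝 z, IsSpectralProj (L x) Q (p x) (q x))
    (htor : ∀ u v, torsion L z u v = 0) {a b : E} (ha : Q a = a) (hb : Q b = 0) :
    fderiv 𝕜 L z b a = 0 := by
  have h := hspec.self_of_nhds
  have hQDL : ∀ w v, Q (fderiv 𝕜 L z w v) = fderiv 𝕜 L z w (Q v) := by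
    intro w v
    simpa using fderiv_apply_comm (differentiableAt_const Q) hL
      (hspec.mono fun _ h => h.commute) w v
  have hker : ∀ b, (1 - Q) b = b ↔ Q b = 0 := fun b => sub_eq_self
  refine h.compl.eq_zero_of_intertwines (C := (fderiv 𝕜 L z).flip a) (fun b hb => ?_)
    (fun b _ => ?_) ((hker b).2 hb)
  · have hQtor := congrArg Q (htor a b)
    simp only [torsion, map_add, map_sub, h.apply_apply, hQDL, ha, (hker b).1 hb, map_zero,
      sub_zero, add_zero] at hQtor
    exact (sub_eq_zero.1 hQtor).symm
  · change fderiv 𝕜 L z b a - Q (fderiv 𝕜 L z b a) = 0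
    rw [hQDL, ha, sub_self]

end NijenhuisOperator

section ChangeOfCoordinates

variable {E : Type*} [NormedAddCommGroup E] [NormedSpace ℝ E]

theorem fderiv_torsion_apply {L Λ : E → E →L[ℝ] E} {Ψ : E → E} {z : E}
    (hΨ : ContDiffAt ℝ 2 Ψ z) (hL : DifferentiableAt ℝ L (Ψ z)) (hΛ : DifferentiableAt ℝ Λ z)
    (hconj : ∀ᶠ x in 𝓝 z, SemiconjBy (fderiv ℝ Ψ x) (Λ x) (L (Ψ x))) (u v : E) :
    fderiv ℝ Ψ z (torsion Λ z u v) = torsion L (Ψ z) (fderiv ℝ Ψ z u) (fderiv ℝ Ψ z v) := by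
  have hsymm : IsSymmSndFDerivAt ℝ Ψ z := hΨ.isSymmSndFDerivAt (by simp)
  have hΨ' : DifferentiableAt ℝ Ψ z := hΨ.differentiableAt (by simp)
  have hJ : DifferentiableAt ℝ (fderiv ℝ Ψ) z :=
    (hΨ.fderiv_right (m := 1) (by norm_num)).differentiableAt (by simp)
  have hLΨ : DifferentiableAt ℝ (fun x => L (Ψ x)) z := hL.comp z hΨ'
  have hD : ∀ a b, fderiv ℝ Ψ z (fderiv ℝ Λ z a b) = L (Ψ z) (fderiv ℝ (fderiv ℝ Ψ) z a b)
      + fderiv ℝ L (Ψ z) (fderiv ℝ Ψ z a) (fderiv ℝ Ψ z b)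
      - fderiv ℝ (fderiv ℝ Ψ) z a (Λ z b) := by
    intro a b
    have heq : (fun x => fderiv ℝ Ψ x * Λ x) =ᶠ[𝓝 z] fun x => L (Ψ x) * fderiv ℝ Ψ x := hconj
    rw [eq_sub_iff_add_eq, ← fderiv_mul_apply_apply hJ hΛ, heq.fderiv_eq,
      fderiv_mul_apply_apply hLΨ hJ, fderiv_fun_comp z hL hΨ']
    rfl
  have hJΛ : ∀ a, fderiv ℝ Ψ z (Λ z a) = L (Ψ z) (fderiv ℝ Ψ z a) :=
    DFunLike.congr_fun hconj.self_of_nhds.eq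
  simp only [torsion, map_add, map_sub, hJΛ, hD]
  rw [hsymm u v, hsymm (Λ z u) v, hsymm (Λ z v) u, hsymm (Λ z v) (Λ z u)]
  abel

end ChangeOfCoordinates

section FiniteDimensional

variable {K V : Type*} [Field K] [AddCommGroup V] [Module K V]

section Charpoly

variable [FiniteDimensional K V]

theorem isRoot_of_isRoot_charpoly {f : Module.End K V} {p : K[X]} (hp : aeval f p = 0) {z : K}
    (hz : f.charpoly.IsRoot z) : p.IsRoot z :=
  (Module.End.isRoot_of_hasEigenvalue
    ((Module.End.hasEigenvalue_iff_isRoot_charpoly f z).2 hz)).dvd (minpoly.dvd K f hp)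

theorem isCoprime_charpoly {f : Module.End K V} {p q : K[X]} (hpq : IsCoprime p q)
    (hp : aeval f p = 0) : IsCoprime f.charpoly q := by
  let F := AlgebraicClosure K
  rw [isCoprime_iff_aeval_ne_zero_of_isAlgClosed K F] at hpq ⊢
  refine fun z => (em (aeval z f.charpoly = 0)).symm.imp_right fun hz => ?_
  have hpF : aeval (f.baseChange F) (p.map (algebraMap K F)) = 0 := by
    rw [aeval_map_algebraMap]
    exact (aeval_algHom_apply (Module.End.baseChangeHom K F V) f p).trans (by rw [hp, map_zero])
  have hroot : (f.baseChange F).charpoly.IsRoot z := by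
    rwa [LinearMap.charpoly_baseChange, IsRoot.def, eval_map_algebraMap]
  have hpz : aeval z p = 0 := by
    rw [← eval_map_algebraMap]
    exact isRoot_of_isRoot_charpoly hpF hroot
  exact (hpq z).resolve_left (not_not_intro hpz)

theorem charpoly_restrict_mul_charpoly_restrict {f : Module.End K V} {M N : Submodule K V}
    (hMN : IsCompl M N) (hM : ∀ x ∈ M, f x ∈ M) (hN : ∀ x ∈ N, f x ∈ N) :
    (f.restrict hM).charpoly * (f.restrict hN).charpoly = f.charpoly := by
  let e := Submodule.prodEquivOfIsCompl M N hMN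
  have hconj : (f.restrict hM).prodMap (f.restrict hN) = e.symm.conj f := by
    refine LinearMap.ext fun x => ?_
    rw [LinearEquiv.conj_apply_apply, LinearEquiv.symm_symm, LinearEquiv.eq_symm_apply]
    simp [e, map_add]
  rw [← LinearMap.charpoly_prodMap, hconj, LinearEquiv.charpoly_conj]

end Charpoly

theorem coe_aeval_restrict {f : Module.End K V} {M : Submodule K V} (hM : ∀ x ∈ M, f x ∈ M)
    (p : K[X]) (x : M) : (aeval (f.restrict hM : Module.End K M) p x : V) = aeval f p x := by
  induction p using Polynomial.induction_on' with
  | add p q hp hq => simp [hp, hq]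
  | monomial n c =>
    simp only [aeval_monomial, Module.End.mul_apply, Module.algebraMap_end_apply,
      Submodule.coe_smul]
    congr 1
    rw [Module.End.pow_restrict, LinearMap.coe_restrict_apply]

theorem IsSpectralProj.finrank_range [FiniteDimensional K V] {f P : Module.End K V} {p q : K[X]}
    (h : IsSpectralProj f P p q) (hf : f.charpoly = p * q) :
    Module.finrank K (LinearMap.range P) = p.natDegree := by
  have hPf : ∀ x, P (f x) = f (P x) := DFunLike.congr_fun h.commute.eq
  have hrange : ∀ x ∈ LinearMap.range P, f x ∈ LinearMap.range P := by
    rintro _ ⟨x, rfl⟩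
    exact ⟨f x, hPf x⟩
  have hker : ∀ x ∈ LinearMap.ker P, f x ∈ LinearMap.ker P := fun x hx => by
    rw [LinearMap.mem_ker, hPf, LinearMap.mem_ker.1 hx, map_zero]
  have hp : aeval (f.restrict hrange) p = 0 := LinearMap.ext fun ⟨_, x, rfl⟩ => Subtype.ext <|
    (coe_aeval_restrict hrange p _).trans (DFunLike.congr_fun h.aeval_mul x)
  have hq : aeval (f.restrict hker) q = 0 := LinearMap.ext fun x => Subtype.ext <| by
    have hx : aeval f q (x - P x) = 0 := DFunLike.congr_fun h.aeval_mul_one_sub (x : V)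
    rw [LinearMap.mem_ker.1 x.2, sub_zero] at hx
    exact (coe_aeval_restrict hker q x).trans hx
  have hmul := (charpoly_restrict_mul_charpoly_restrict
    (LinearMap.IsIdempotentElem.isCompl h.isIdempotentElem) hrange hker).trans hf
  have hp0 : p ≠ 0 := left_ne_zero_of_mul (hf ▸ f.charpoly_monic.ne_zero)
  rw [← LinearMap.charpoly_natDegree (f.restrict hrange)]
  refine le_antisymm (natDegree_le_of_dvd ?_ hp0)
    (natDegree_le_of_dvd ?_ (LinearMap.charpoly_monic _).ne_zero)
  · exact (isCoprime_charpoly h.isCoprime hp).dvd_of_dvd_mul_right (Dvd.intro _ hmul)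
  · exact (isCoprime_charpoly h.isCoprime.symm hq).symm.dvd_of_dvd_mul_right
      (Dvd.intro _ hmul.symm)

theorem exists_semiconjBy_of_finrank_range_eq [FiniteDimensional K V] {P Q : Module.End K V}
    (hP : IsIdempotentElem P) (hQ : IsIdempotentElem Q)
    (h : Module.finrank K (LinearMap.range P) = Module.finrank K (LinearMap.range Q)) :
    ∃ T : V ≃ₗ[K] V, SemiconjBy (T : Module.End K V) P Q := by
  have hker : Module.finrank K (LinearMap.ker P) = Module.finrank K (LinearMap.ker Q) := by
    have hrankP := LinearMap.finrank_range_add_finrank_ker P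
    have hrankQ := LinearMap.finrank_range_add_finrank_ker Q
    omega
  let a := LinearEquiv.ofFinrankEq _ _ h
  let b := LinearEquiv.ofFinrankEq _ _ hker
  let eP := Submodule.prodEquivOfIsCompl _ _ (LinearMap.IsIdempotentElem.isCompl hP)
  let eQ := Submodule.prodEquivOfIsCompl _ _ (LinearMap.IsIdempotentElem.isCompl hQ)
  let T : V ≃ₗ[K] V := eP.symm ≪≫ₗ (a.prodCongr b) ≪≫ₗ eQ
  have hT : ∀ x y, T (eP (x, y)) = a x + b y := fun x y => by simp [T, eQ]
  have hrangeP : ∀ x : LinearMap.range P, P x = x := fun x =>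
    (LinearMap.IsIdempotentElem.mem_range_iff hP).1 x.2
  have hrangeQ : ∀ x : LinearMap.range Q, Q x = x := fun x =>
    (LinearMap.IsIdempotentElem.mem_range_iff hQ).1 x.2
  refine ⟨T, LinearMap.ext fun v => ?_⟩
  obtain ⟨⟨x, y⟩, rfl⟩ := eP.surjective v
  have hPx : P (eP (x, y)) = eP (x, 0) := by simp [eP, hrangeP]
  calc T (P (eP (x, y))) = a x := by rw [hPx, hT, map_zero, ZeroMemClass.coe_zero, add_zero]
    _ = Q (T (eP (x, y))) := by
      rw [hT, map_add, hrangeQ, LinearMap.mem_ker.1 (b y).2, add_zero]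

end FiniteDimensional

section AdaptedCoordinates

variable {E : Type*} [NormedAddCommGroup E] [NormedSpace ℝ E]

theorem fderiv_mul_fderiv_eq_one {f g : E → E} {z : E} (hf : DifferentiableAt ℝ f (g z))
    (hg : DifferentiableAt ℝ g z) (hfg : ∀ᶠ x in 𝓝 z, f (g x) = x) :
    fderiv ℝ f (g z) * fderiv ℝ g z = 1 := by
  have hcomp : f ∘ g =ᶠ[𝓝 z] id := hfg
  exact (fderiv_comp z hf hg).symm.trans (hcomp.fderiv_eq.trans fderiv_id)

/-- A smooth chart `e` which turns the family of operators `P` into the constant operator `Q`. For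
projections, the ranges and kernels of `P` thus become parallel to those of `Q`. -/
structure IsAdaptedChart (e : OpenPartialHomeomorph E E) (P : E → E →L[ℝ] E) (Q : E →L[ℝ] E) :
    Prop where
  contDiffOn : ContDiffOn ℝ ∞ e e.source
  contDiffOn_symm : ContDiffOn ℝ ∞ e.symm e.target
  semiconjBy : ∀ x ∈ e.source, SemiconjBy (fderiv ℝ e x) (P x) Q

/-- The coordinate expression of the operator field `L` in the chart `e`. -/
def pushforward (e : OpenPartialHomeomorph E E) (L : E → E →L[ℝ] E) (z : E) : E →L[ℝ] E :=
  fderiv ℝ e (e.symm z) * L (e.symm z) * fderiv ℝ e.symm z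

-- The first integrals of `range P` provide the coordinates along `ker P`, and vice versa.
theorem exists_semiconjBy_fderiv [HasContDiffBump E] [CompleteSpace E] {P : E → E →L[ℝ] E}
    {U : Set E} (hU : IsOpen U) (hP : ContDiffOn ℝ ∞ P U)
    (hidem : ∀ z ∈ U, IsIdempotentElem (P z)) (hrange : ∀ z ∈ U, IsInvolutiveAt P z)
    (hker : ∀ z ∈ U, IsInvolutiveAt (fun x => 1 - P x) z) {p : E} (hp : p ∈ U) :
    ∃ (f : E → E) (V : Set E), IsOpen V ∧ p ∈ V ∧ V ⊆ U ∧ ContDiffOn ℝ ∞ f V ∧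
      (∀ z ∈ V, SemiconjBy (fderiv ℝ f z) (P z) (P p)) ∧ fderiv ℝ f p = 1 := by
  obtain ⟨g, V, hV, hpV, hVU, hg, hgP, hPg, hgp⟩ := exists_first_integrals hU hP hidem hrange hp
  obtain ⟨h, W, hW, hpW, -, hh, hhP, hPh, hhp⟩ :=
    exists_first_integrals hU (contDiffOn_const.sub hP) (fun z hz => (hidem z hz).one_sub) hker hp
  have hsum : ∀ z ∈ V ∩ W, fderiv ℝ (fun z => g z + h z) z = fderiv ℝ g z + fderiv ℝ h z :=
    fun z hz => fderiv_fun_add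
      ((hg.contDiffAt (hV.mem_nhds hz.1)).differentiableAt (by simp))
      ((hh.contDiffAt (hW.mem_nhds hz.2)).differentiableAt (by simp))
  refine ⟨fun z => g z + h z, V ∩ W, hV.inter hW, ⟨hpV, hpW⟩, Set.inter_subset_left.trans hVU,
    (hg.mono Set.inter_subset_left).add (hh.mono Set.inter_subset_right), fun z hz => ?_, ?_⟩
  · have hhP' : fderiv ℝ h z = fderiv ℝ h z * P z := by
      rw [← sub_eq_zero, ← mul_one_sub, hhP z hz.2]
    have hPh' : fderiv ℝ h z = P p * fderiv ℝ h z := by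
      rw [← sub_eq_zero, ← one_sub_mul, hPh z hz.2]
    rw [hsum z hz, SemiconjBy, add_mul, mul_add, hgP z hz.1, hPg z hz.1, ← hhP', ← hPh']
  · rw [hsum p ⟨hpV, hpW⟩, hgp, hhp, sub_sub_cancel, sub_add_cancel]

theorem exists_isAdaptedChart [HasContDiffBump E] [CompleteSpace E] {P : E → E →L[ℝ] E}
    {U : Set E} (hU : IsOpen U) (hP : ContDiffOn ℝ ∞ P U)
    (hidem : ∀ z ∈ U, IsIdempotentElem (P z)) (hrange : ∀ z ∈ U, IsInvolutiveAt P z)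
    (hker : ∀ z ∈ U, IsInvolutiveAt (fun x => 1 - P x) z) {p : E} (hp : p ∈ U) (T : E ≃L[ℝ] E)
    {Q : E →L[ℝ] E} (hT : SemiconjBy (T : E →L[ℝ] E) (P p) Q) :
    ∃ e : OpenPartialHomeomorph E E, p ∈ e.source ∧ e.source ⊆ U ∧ IsAdaptedChart e P Q := by
  obtain ⟨f, V, hV, hpV, hVU, hf, hfP, hfp⟩ := exists_semiconjBy_fderiv hU hP hidem hrange hker hp
  have hTf : ContDiffOn ℝ ∞ (fun z => T (f z)) V := (T : E →L[ℝ] E).contDiff.comp_contDiffOn hf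
  have hTf' : ∀ z ∈ V, HasFDerivAt (fun z => T (f z)) ((T : E →L[ℝ] E) * fderiv ℝ f z) z :=
    fun z hz => (T : E →L[ℝ] E).hasFDerivAt.comp z
      ((hf.contDiffAt (hV.mem_nhds hz)).differentiableAt (by simp)).hasFDerivAt
  have hTfp : HasFDerivAt (fun z => T (f z)) (T : E →L[ℝ] E) p := by
    have hcomp := hTf' p hpV
    rwa [hfp, mul_one] at hcomp
  obtain ⟨e, hpe, heV, he, hesymm, -⟩ := exists_local_diffeo hV hTf hpV T hTfp
  have heTf : ⇑e = fun z => T (f z) := funext he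
  refine ⟨e, hpe, heV.trans hVU, heTf ▸ hTf.mono heV, hesymm, fun x hx => ?_⟩
  rw [heTf, (hTf' x (heV hx)).fderiv]
  exact hT.mul_left (hfP x (heV hx))

namespace IsAdaptedChart

variable {e : OpenPartialHomeomorph E E} {L P : E → E →L[ℝ] E} {Q : E →L[ℝ] E} {z : E}

theorem differentiableAt (h : IsAdaptedChart e P Q) {x : E} (hx : x ∈ e.source) :
    DifferentiableAt ℝ e x :=
  (h.contDiffOn.contDiffAt (e.open_source.mem_nhds hx)).differentiableAt (by simp)

theorem differentiableAt_symm (h : IsAdaptedChart e P Q) (hz : z ∈ e.target) :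
    DifferentiableAt ℝ e.symm z :=
  (h.contDiffOn_symm.contDiffAt (e.open_target.mem_nhds hz)).differentiableAt (by simp)

theorem fderiv_mul_fderiv_symm (h : IsAdaptedChart e P Q) (hz : z ∈ e.target) :
    fderiv ℝ e (e.symm z) * fderiv ℝ e.symm z = 1 :=
  fderiv_mul_fderiv_eq_one (h.differentiableAt (e.map_target hz)) (h.differentiableAt_symm hz)
    (e.eventually_right_inverse hz)

theorem fderiv_symm_mul_fderiv (h : IsAdaptedChart e P Q) (hz : z ∈ e.target) :
    fderiv ℝ e.symm z * fderiv ℝ e (e.symm z) = 1 := by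
  have hx := e.map_target hz
  have hinverse := fderiv_mul_fderiv_eq_one (h.differentiableAt_symm (e.map_source hx))
    (h.differentiableAt hx) (e.eventually_left_inverse hx)
  rwa [e.right_inv hz] at hinverse

theorem isSpectralProj_pushforward (h : IsAdaptedChart e P Q) (hz : z ∈ e.target) {p q : ℝ[X]}
    (hspec : IsSpectralProj (L (e.symm z)) (P (e.symm z)) p q) :
    IsSpectralProj (pushforward e L z) Q p q := by
  refine hspec.conj (t := fderiv ℝ e (e.symm z))
    ⟨⟨_, _, h.fderiv_mul_fderiv_symm hz, h.fderiv_symm_mul_fderiv hz⟩, rfl⟩ ?_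
    (h.semiconjBy _ (e.map_target hz))
  rw [SemiconjBy, pushforward, mul_assoc, h.fderiv_symm_mul_fderiv hz, mul_one]

theorem contDiffOn_pushforward (h : IsAdaptedChart e P Q) (hL : ContDiffOn ℝ ∞ L e.source) :
    ContDiffOn ℝ ∞ (pushforward e L) e.target := by
  have hmaps : Set.MapsTo e.symm e.target e.source := fun z hz => e.map_target hz
  have hfderiv := h.contDiffOn.fderiv_of_isOpen (m := ∞) e.open_source (by simp)
  have hfderiv_symm := h.contDiffOn_symm.fderiv_of_isOpen (m := ∞) e.open_target (by simp)
  exact ((hfderiv.comp h.contDiffOn_symm hmaps).mul (hL.comp h.contDiffOn_symm hmaps)).mul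
    hfderiv_symm

theorem torsion_pushforward_eq_zero (h : IsAdaptedChart e P Q) (hL : ContDiffOn ℝ ∞ L e.source)
    (hz : z ∈ e.target) (htor : ∀ u v, torsion L (e.symm z) u v = 0) (u v : E) :
    torsion (pushforward e L) z u v = 0 := by
  have htarget := e.open_target.mem_nhds hz
  have htransform : fderiv ℝ e.symm z (torsion (pushforward e L) z u v) = 0 := by
    rw [fderiv_torsion_apply
      ((h.contDiffOn_symm.contDiffAt htarget).of_le (by norm_cast))
      ((hL.contDiffAt (e.open_source.mem_nhds (e.map_target hz))).differentiableAt (by simp))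
      (((h.contDiffOn_pushforward hL).contDiffAt htarget).differentiableAt (by simp)), htor]
    filter_upwards [htarget] with x hx
    rw [SemiconjBy, pushforward, ← mul_assoc, ← mul_assoc, h.fderiv_symm_mul_fderiv hx, one_mul]
  calc torsion (pushforward e L) z u v
      = (fderiv ℝ e (e.symm z) * fderiv ℝ e.symm z) (torsion (pushforward e L) z u v) := by
        rw [h.fderiv_mul_fderiv_symm hz, one_apply_eq_self]
    _ = 0 := by rw [mul_apply_eq_comp, htransform, map_zero]

theorem compl (h : IsAdaptedChart e P Q) : IsAdaptedChart e (fun x => 1 - P x) (1 - Q) :=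
  ⟨h.contDiffOn, h.contDiffOn_symm,
    fun x hx => (SemiconjBy.one_right _).sub_right (h.semiconjBy x hx)⟩

theorem fderiv_pushforward_apply_eq_zero (h : IsAdaptedChart e P Q)
    (hL : ContDiffOn ℝ ∞ L e.source) {p q : E → ℝ[X]}
    (hspec : ∀ x ∈ e.source, IsSpectralProj (L x) (P x) (p x) (q x)) (hz : z ∈ e.target)
    (htor : ∀ u v, torsion L (e.symm z) u v = 0) {a b : E} (ha : Q a = a) (hb : Q b = 0) :
    fderiv ℝ (pushforward e L) z b a = 0 := by
  have htarget := e.open_target.mem_nhds hz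
  have hspec' : ∀ᶠ x in 𝓝 z, IsSpectralProj (pushforward e L x) Q (p (e.symm x)) (q (e.symm x)) :=
    eventually_of_mem htarget fun x hx =>
      h.isSpectralProj_pushforward hx (hspec _ (e.map_target hx))
  exact fderiv_apply_eq_zero_of_torsion_eq_zero
    (((h.contDiffOn_pushforward hL).contDiffAt htarget).differentiableAt (by simp)) hspec'
    (h.torsion_pushforward_eq_zero hL hz htor) ha hb

end IsAdaptedChart

end AdaptedCoordinates

section MatrixOperators

/-- Square matrices as continuous linear operators, through matrix-vector multiplication. -/
def mulVecCLM : Matrix ι ι ℝ ≃ₐ[ℝ] (ι → ℝ) →L[ℝ] (ι → ℝ) :=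
  Matrix.toLinAlgEquiv'.trans (Module.End.toContinuousLinearMap (ι → ℝ))

theorem mulVecCLM_apply (A : Matrix ι ι ℝ) (v : ι → ℝ) : mulVecCLM A v = A *ᵥ v := rfl

theorem mulVecCLM_single (A : Matrix ι ι ℝ) (i j : ι) :
    mulVecCLM A (Pi.single j 1) i = A i j := by
  rw [mulVecCLM_apply, Matrix.mulVec_single_one, Matrix.col_apply]

theorem mulVecCLM_aeval (A : Matrix ι ι ℝ) (p : ℝ[X]) :
    mulVecCLM (aeval A p) = aeval (mulVecCLM A) p :=
  (aeval_algHom_apply mulVecCLM.toAlgHom A p).symm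

theorem mem_ker_mulVecLin_aeval {A : Matrix ι ι ℝ} {p : ℝ[X]} {w : ι → ℝ} :
    w ∈ LinearMap.ker (aeval A p).mulVecLin ↔ aeval (mulVecCLM A) p w = 0 := by
  rw [← mulVecCLM_aeval]
  exact Iff.rfl

theorem contDiffOn_mulVecCLM {L : (ι → ℝ) → Matrix ι ι ℝ} {U : Set (ι → ℝ)}
    (hL : ∀ i j, ContDiffOn ℝ ∞ (fun x => L x i j) U) :
    ContDiffOn ℝ ∞ (fun x => mulVecCLM (L x)) U := by
  let Λ : (ι → ι → ℝ) →L[ℝ] (ι → ℝ) →L[ℝ] (ι → ℝ) := LinearMap.toContinuousLinearMap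
    (mulVecCLM.toLinearMap ∘ₗ (Matrix.ofLinearEquiv ℝ).toLinearMap)
  exact Λ.contDiff.comp_contDiffOn (f := fun x i j => L x i j)
    (contDiffOn_pi.2 fun i => contDiffOn_pi.2 fun j => hL i j)

theorem mulVecCLM_jac {f : (ι → ℝ) → ι → ℝ} {x : ι → ℝ} (hf : DifferentiableAt ℝ f x) :
    mulVecCLM (jac f x) = fderiv ℝ f x := by
  refine ContinuousLinearMap.coe_injective (LinearMap.pi_ext' fun j => LinearMap.ext_ring ?_)
  funext i
  calc mulVecCLM (jac f x) (Pi.single j 1) i = fderiv ℝ (fun y => f y i) x (Pi.single j 1) :=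
        mulVecCLM_single _ i j
    _ = fderiv ℝ f x (Pi.single j 1) i := by rw [fderiv_apply hf i]; rfl

theorem pd_entry_eq {A : (ι → ℝ) → Matrix ι ι ℝ} {z : ι → ℝ}
    (hA : DifferentiableAt ℝ (fun w => mulVecCLM (A w)) z) (i j m : ι) :
    pd m (fun w => A w i j) z
      = fderiv ℝ (fun w => mulVecCLM (A w)) z (Pi.single m 1) (Pi.single j 1) i := by
  let entry : ((ι → ℝ) →L[ℝ] (ι → ℝ)) →L[ℝ] ℝ :=
    ContinuousLinearMap.proj (R := ℝ) (φ := fun _ : ι => ℝ) i ∘L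
      ContinuousLinearMap.apply ℝ (ι → ℝ) (Pi.single j 1 : ι → ℝ)
  have hentry : (fun w => A w i j) = fun w => entry (mulVecCLM (A w)) :=
    funext fun w => (mulVecCLM_single (A w) i j).symm
  have hderiv : HasFDerivAt (fun w => entry (mulVecCLM (A w)))
      (entry ∘L fderiv ℝ (fun w => mulVecCLM (A w)) z) z :=
    entry.hasFDerivAt.comp z hA.hasFDerivAt
  rw [pd, hentry, hderiv.fderiv]
  rfl

theorem nijenhuis_const {L : (ι → ℝ) → Matrix ι ι ℝ} {x : ι → ℝ}
    (hL : DifferentiableAt ℝ (fun x => mulVecCLM (L x)) x) (u v : ι → ℝ) :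
    nijenhuis L (fun _ => u) (fun _ => v) x = torsion (fun x => mulVecCLM (L x)) x u v := by
  have happT : ∀ w a, fderiv ℝ (appT L fun _ => w) x a
      = fderiv ℝ (fun x => mulVecCLM (L x)) x a w := fun w a => DFunLike.congr_fun
    ((ContinuousLinearMap.apply ℝ (ι → ℝ) w).hasFDerivAt.comp x hL.hasFDerivAt).fderiv a
  simp only [nijenhuis, vbracket, happT, fderiv_fun_const, Pi.zero_apply, _root_.zero_apply,
    sub_zero, zero_sub, ← mulVecCLM_apply, map_zero, map_neg, torsion, appT]
  abel

theorem NijenhuisZero.torsion_eq_zero {L : (ι → ℝ) → Matrix ι ι ℝ} {U : Set (ι → ℝ)}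
    (hL : NijenhuisZero L U) {x : ι → ℝ} (hx : x ∈ U)
    (hdiff : DifferentiableAt ℝ (fun x => mulVecCLM (L x)) x) (u v : ι → ℝ) :
    torsion (fun x => mulVecCLM (L x)) x u v = 0 := by
  rw [← nijenhuis_const hdiff]
  exact hL _ _ contDiff_const contDiff_const x hx

/-- The projection of `ι → ℝ` onto the coordinates satisfying `s`. -/
def coordProj (s : ι → Prop) [DecidablePred s] : (ι → ℝ) →L[ℝ] (ι → ℝ) :=
  mulVecCLM (Matrix.diagonal fun i => if s i then 1 else 0)

section CoordProj

variable {s : ι → Prop} [DecidablePred s]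

theorem coordProj_apply (v : ι → ℝ) (i : ι) : coordProj s v i = if s i then v i else 0 := by
  rw [coordProj, mulVecCLM_apply, Matrix.mulVec_diagonal, ite_mul, one_mul, zero_mul]

theorem isIdempotentElem_coordProj : IsIdempotentElem (coordProj s) := by
  rw [IsIdempotentElem, coordProj, ← map_mul, Matrix.diagonal_mul_diagonal]
  simp only [mul_ite, mul_one, mul_zero, ← ite_and, and_self]

theorem coordProj_single_of_pos {i : ι} (hi : s i) :
    coordProj s (Pi.single i 1) = Pi.single i 1 := by
  funext k
  rw [coordProj_apply]
  obtain rfl | hk := eq_or_ne k i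
  · rw [if_pos hi]
  · rw [Pi.single_eq_of_ne hk, ite_self]

theorem coordProj_single_of_neg {i : ι} (hi : ¬ s i) : coordProj s (Pi.single i 1) = 0 := by
  funext k
  rw [coordProj_apply, Pi.zero_apply]
  obtain rfl | hk := eq_or_ne k i
  · rw [if_neg hi]
  · rw [Pi.single_eq_of_ne hk, ite_self]

theorem coordProj_not : coordProj (fun i => ¬ s i) = 1 - coordProj s := by
  refine ContinuousLinearMap.ext fun v => funext fun i => ?_
  change coordProj (fun i => ¬ s i) v i = v i - coordProj s v i
  rw [coordProj_apply, coordProj_apply, ite_not]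
  split_ifs <;> simp

theorem mem_span_single_iff {w : ι → ℝ} :
    w ∈ Submodule.span ℝ {e : ι → ℝ | ∃ i, s i ∧ e = Pi.single i 1} ↔ coordProj s w = w := by
  have himage : {e : ι → ℝ | ∃ i, s i ∧ e = Pi.single i 1} = Pi.basisFun ℝ ι '' {i | s i} := by
    ext e
    simp [eq_comm]
  rw [himage, Module.Basis.mem_span_image, funext_iff]
  refine forall_congr' fun i => ?_
  rw [coordProj_apply]
  by_cases hi : s i <;> simp [hi, eq_comm]

theorem finrank_range_coordProj :
    Module.finrank ℝ (LinearMap.range (coordProj s).toLinearMap) = Fintype.card {i // s i} := by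
  have hrank := Matrix.rank_diagonal (fun i => if s i then (1 : ℝ) else 0)
  exact hrank.trans (Fintype.card_congr (Equiv.subtypeEquivRight fun i => by simp))

end CoordProj

end MatrixOperators

theorem IsInvolutiveAt.apply_bracket {𝕜 E : Type*} [NontriviallyNormedField 𝕜]
    [NormedAddCommGroup E] [NormedSpace 𝕜 E] {P : E → E →L[𝕜] E} {u v : E → E} {x : E}
    (h : IsInvolutiveAt P x) (hP : DifferentiableAt 𝕜 P x) (hu : DifferentiableAt 𝕜 u x)
    (hv : DifferentiableAt 𝕜 v x) (hPu : ∀ᶠ y in 𝓝 x, P y (u y) = u y)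
    (hPv : ∀ᶠ y in 𝓝 x, P y (v y) = v y) :
    P x (fderiv 𝕜 v x (u x) - fderiv 𝕜 u x (v x)) = fderiv 𝕜 v x (u x) - fderiv 𝕜 u x (v x) := by
  have hderiv : ∀ s : E → E, DifferentiableAt 𝕜 s x → (∀ᶠ y in 𝓝 x, P y (s y) = s y) →
      ∀ w, P x (fderiv 𝕜 s x w) = fderiv 𝕜 s x w - fderiv 𝕜 P x w (s x) := by
    intro s hs hPs w
    have heq : (fun y => P y (s y)) =ᶠ[𝓝 x] s := hPs
    have happly := DFunLike.congr_fun (fderiv_clm_apply hP hs) w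
    rw [heq.fderiv_eq] at happly
    exact eq_sub_of_add_eq happly.symm
  rw [map_sub, hderiv v hv hPv, hderiv u hu hPu, h _ _ hPu.self_of_nhds hPv.self_of_nhds,
    sub_sub_sub_cancel_right]

section AdmissibleFactorisation

variable {L : (ι → ℝ) → Matrix ι ι ℝ} {U : Set (ι → ℝ)} {chi1 chi2 : (ι → ℝ) → ℝ[X]} {x : ι → ℝ}

omit [DecidableEq ι] in
theorem NijenhuisZero.mono {V : Set (ι → ℝ)} (hNL : NijenhuisZero L U) (hVU : V ⊆ U) :
    NijenhuisZero L V :=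
  fun u v hu hv x hx => hNL u v hu hv x (hVU hx)

theorem NijenhuisZero.isInvolutiveAt {P : (ι → ℝ) → (ι → ℝ) →L[ℝ] (ι → ℝ)}
    (hNL : NijenhuisZero L U) (hU : IsOpen U)
    (hL : ∀ i j, ContDiffOn ℝ ∞ (fun x => L x i j) U) (hP : ContDiffOn ℝ ∞ P U)
    (hspec : ∀ x ∈ U, IsSpectralProj (mulVecCLM (L x)) (P x) (chi1 x) (chi2 x)) (hx : x ∈ U) :
    IsInvolutiveAt P x := by
  have hLx : DifferentiableAt ℝ (fun x => mulVecCLM (L x)) x :=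
    ((contDiffOn_mulVecCLM hL).contDiffAt (hU.mem_nhds hx)).differentiableAt (by simp)
  exact isInvolutiveAt_of_torsion_eq_zero hLx
    ((hP.contDiffAt (hU.mem_nhds hx)).differentiableAt (by simp))
    (eventually_of_mem (hU.mem_nhds hx) hspec) (hNL.torsion_eq_zero hx hLx)

/-- The field of spectral projections of the matrix field `L` onto `ker χ₁(L)` along `ker χ₂(L)`. -/
def spectralField (L : (ι → ℝ) → Matrix ι ι ℝ) (chi1 chi2 : (ι → ℝ) → ℝ[X]) (x : ι → ℝ) :
    (ι → ℝ) →L[ℝ] (ι → ℝ) :=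
  spectralProj (mulVecCLM (L x)) (chi1 x) (chi2 x)

namespace AdmissibleFact

theorem symm (h : AdmissibleFact L U chi1 chi2) : AdmissibleFact L U chi2 chi1 where
  factor x hx := by rw [h.factor x hx, mul_comm]
  monic1 := h.monic2
  monic2 := h.monic1
  deg1 := h.deg2
  deg2 := h.deg1
  smooth1 := h.smooth2
  smooth2 := h.smooth1
  coprime x hx := fun ⟨z, hz⟩ => h.coprime x hx ⟨z, hz.symm⟩

theorem isCoprime (h : AdmissibleFact L U chi1 chi2) (hx : x ∈ U) :
    IsCoprime (chi1 x) (chi2 x) := by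
  refine (Polynomial.isCoprime_iff_aeval_ne_zero_of_isAlgClosed ℝ ℂ _ _).2 fun z => ?_
  by_contra! hz
  exact h.coprime x hx ⟨z, hz⟩

theorem aeval_mulVecCLM (h : AdmissibleFact L U chi1 chi2) (hx : x ∈ U) :
    aeval (mulVecCLM (L x)) (chi1 x * chi2 x) = 0 := by
  rw [← h.factor x hx, ← mulVecCLM_aeval, Matrix.aeval_self_charpoly, map_zero]

theorem natDegree_lt (h : AdmissibleFact L U chi1 chi2) (hx : x ∈ U) :
    (chi1 x).natDegree < Fintype.card ι + 1 := by
  rw [Nat.lt_succ_iff, ← Matrix.charpoly_natDegree_eq_dim (L x), h.factor x hx,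
    (h.monic1 x hx).natDegree_mul (h.monic2 x hx)]
  exact Nat.le_add_right _ _

theorem isSpectralProj (h : AdmissibleFact L U chi1 chi2) (hx : x ∈ U) :
    IsSpectralProj (mulVecCLM (L x)) (spectralField L chi1 chi2 x) (chi1 x) (chi2 x) :=
  isSpectralProj_spectralProj (h.isCoprime hx) (h.aeval_mulVecCLM hx)

theorem contDiffOn_spectralField (h : AdmissibleFact L U chi1 chi2)
    (hL : ∀ i j, ContDiffOn ℝ ∞ (fun x => L x i j) U) :
    ContDiffOn ℝ ∞ (spectralField L chi1 chi2) U :=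
  contDiffOn_spectralProj (contDiffOn_mulVecCLM hL) h.smooth1 h.smooth2
    (fun _ hx => h.natDegree_lt hx) (fun _ hx => h.symm.natDegree_lt hx)
    (fun _ hx => h.isCoprime hx) fun _ hx => h.aeval_mulVecCLM hx

theorem mem_Dker (h : AdmissibleFact L U chi1 chi2) (hx : x ∈ U) {w : ι → ℝ} :
    w ∈ Dker L chi1 x ↔ spectralField L chi1 chi2 x w = w :=
  mem_ker_mulVecLin_aeval.trans (h.isSpectralProj hx).aeval_apply_eq_zero_iff

theorem isIntegrableDist_Dker (h : AdmissibleFact L U chi1 chi2) (hU : IsOpen U)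
    (hL : ∀ i j, ContDiffOn ℝ ∞ (fun x => L x i j) U) (hNL : NijenhuisZero L U) :
    IsIntegrableDist U (Dker L chi1) := by
  intro u v hu hv hDu hDv x hx
  have hmem := hU.mem_nhds hx
  have hP := h.contDiffOn_spectralField hL
  rw [h.mem_Dker hx]
  exact (hNL.isInvolutiveAt hU hL hP (fun _ hy => h.isSpectralProj hy) hx).apply_bracket
    ((hP.contDiffAt hmem).differentiableAt (by simp))
    ((hu.contDiffAt hmem).differentiableAt (by simp))
    ((hv.contDiffAt hmem).differentiableAt (by simp))
    (eventually_of_mem hmem fun y hy => (h.mem_Dker hy).1 (hDu y hy))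
    (eventually_of_mem hmem fun y hy => (h.mem_Dker hy).1 (hDv y hy))

theorem finrank_range_spectralField (h : AdmissibleFact L U chi1 chi2) (hx : x ∈ U) :
    Module.finrank ℝ (LinearMap.range (spectralField L chi1 chi2 x).toLinearMap)
      = (chi1 x).natDegree :=
  ((h.isSpectralProj hx).map
      (Module.End.toContinuousLinearMap (ι → ℝ)).symm.toAlgHom).finrank_range <|
    (Matrix.charpoly_toLin' (L x)).trans (h.factor x hx)

theorem exists_isAdaptedChart (h : AdmissibleFact L U chi1 chi2) (hU : IsOpen U)
    (hL : ∀ i j, ContDiffOn ℝ ∞ (fun x => L x i j) U) (hNL : NijenhuisZero L U) (hx : x ∈ U)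
    {s : ι → Prop} [DecidablePred s] (hs : Fintype.card {i // s i} = (chi1 x).natDegree) :
    ∃ e : OpenPartialHomeomorph (ι → ℝ) (ι → ℝ), x ∈ e.source ∧ e.source ⊆ U ∧
      IsAdaptedChart e (spectralField L chi1 chi2) (coordProj s) := by
  have hP := h.contDiffOn_spectralField hL
  have hidem : ∀ y ∈ U, IsIdempotentElem (spectralField L chi1 chi2 y) :=
    fun y hy => (h.isSpectralProj hy).isIdempotentElem
  obtain ⟨T, hT⟩ := exists_semiconjBy_of_finrank_range_eq
    (ContinuousLinearMap.IsIdempotentElem.toLinearMap (hidem x hx))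
    (ContinuousLinearMap.IsIdempotentElem.toLinearMap isIdempotentElem_coordProj)
    ((h.finrank_range_spectralField hx).trans (hs.symm.trans finrank_range_coordProj.symm))
  exact _root_.exists_isAdaptedChart hU hP hidem
    (fun y hy => hNL.isInvolutiveAt hU hL hP (fun _ hy => h.isSpectralProj hy) hy)
    (fun y hy => hNL.isInvolutiveAt hU hL (contDiffOn_const.sub hP)
      (fun _ hy => (h.isSpectralProj hy).compl) hy)
    hx T.toContinuousLinearEquiv (ContinuousLinearMap.coe_injective hT)

end AdmissibleFact

end AdmissibleFactorisation

section MatrixCharts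

variable {s : ι → Prop} [DecidablePred s]

theorem IsSpectralProj.ker_mulVecLin_aeval {A : Matrix ι ι ℝ} {p q : ℝ[X]}
    (h : IsSpectralProj (mulVecCLM A) (coordProj s) p q) :
    LinearMap.ker (aeval A p).mulVecLin
      = Submodule.span ℝ {e : ι → ℝ | ∃ i, s i ∧ e = Pi.single i 1} :=
  Submodule.ext fun _ =>
    mem_ker_mulVecLin_aeval.trans (h.aeval_apply_eq_zero_iff.trans mem_span_single_iff.symm)

theorem IsSpectralProj.matrix_apply_eq_zero {A : Matrix ι ι ℝ} {p q : ℝ[X]}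
    (h : IsSpectralProj (mulVecCLM A) (coordProj s) p q) {i j : ι} (hi : s i) (hj : ¬ s j) :
    A i j = 0 := by
  have hij := congrFun (h.apply_apply (Pi.single j 1)) i
  rwa [coordProj_apply, if_pos hi, mulVecCLM_single, coordProj_single_of_neg hj, map_zero] at hij

namespace IsAdaptedChart

variable {e : OpenPartialHomeomorph (ι → ℝ) (ι → ℝ)} {P : (ι → ℝ) → (ι → ℝ) →L[ℝ] (ι → ℝ)}
  {L LT : (ι → ℝ) → Matrix ι ι ℝ}

theorem mulVecCLM_eq_pushforward {Q : (ι → ℝ) →L[ℝ] (ι → ℝ)} (h : IsAdaptedChart e P Q)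
    (hLT : ∀ z ∈ e.target, LT z = jac e (e.symm z) * L (e.symm z) * jac e.symm z) :
    Set.EqOn (fun z => mulVecCLM (LT z)) (pushforward e fun x => mulVecCLM (L x)) e.target := by
  intro z hz
  simp only [hLT z hz, map_mul, mulVecCLM_jac (h.differentiableAt (e.map_target hz)),
    mulVecCLM_jac (h.differentiableAt_symm hz), pushforward]

theorem pd_eq_zero (h : IsAdaptedChart e P (coordProj s))
    (hL : ∀ i j, ContDiffOn ℝ ∞ (fun x => L x i j) e.source) (hNL : NijenhuisZero L e.source)
    (hLT : ∀ z ∈ e.target, LT z = jac e (e.symm z) * L (e.symm z) * jac e.symm z)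
    {p q : (ι → ℝ) → ℝ[X]}
    (hspec : ∀ x ∈ e.source, IsSpectralProj (mulVecCLM (L x)) (P x) (p x) (q x))
    {z : ι → ℝ} (hz : z ∈ e.target) {j m : ι} (hj : s j) (hm : ¬ s m) (i : ι) :
    pd m (fun w => LT w i j) z = 0 := by
  have htarget := e.open_target.mem_nhds hz
  have hL' := contDiffOn_mulVecCLM hL
  have hLx := hL'.contDiffAt (e.open_source.mem_nhds (e.map_target hz))
  have heq := (h.mulVecCLM_eq_pushforward hLT).eventuallyEq_of_mem htarget
  have hpush := ((h.contDiffOn_pushforward hL').contDiffAt htarget).differentiableAt (by simp)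
  rw [pd_entry_eq (heq.differentiableAt_iff.2 hpush), heq.fderiv_eq,
    h.fderiv_pushforward_apply_eq_zero hL' hspec hz
      (hNL.torsion_eq_zero (e.map_target hz) (hLx.differentiableAt (by simp)))
      (coordProj_single_of_pos hj) (coordProj_single_of_neg hm), Pi.zero_apply]

end IsAdaptedChart

theorem coordSpan'_eq_span_not (n r : ℕ) : coordSpan' n r =
    Submodule.span ℝ {e : Fin n → ℝ | ∃ i : Fin n, ¬ (i : ℕ) < r ∧ e = Pi.single i 1} := by
  simp only [coordSpan', not_lt]

end MatrixCharts

theorem card_fin_val_lt {n r : ℕ} (hr : r ≤ n) :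
    Fintype.card {i : Fin n // (i : ℕ) < r} = r := by
  rw [Fintype.card_subtype, Fin.card_filter_val_lt, min_eq_right hr]

theorem stmt14 {n r : ℕ} (hr : r ≤ n) (U : Set (Fin n → ℝ)) (hU : IsOpen U)
    (L : (Fin n → ℝ) → Matrix (Fin n) (Fin n) ℝ)
    (hLsmooth : ∀ i j, ContDiffOn ℝ (⊤ : ℕ∞) (fun x => L x i j) U)
    (hNL : NijenhuisZero L U)
    (chi1 chi2 : (Fin n → ℝ) → Polynomial ℝ)
    (hfac : AdmissibleFact L U chi1 chi2)
    (hdeg : ∀ x ∈ U, (chi1 x).natDegree = r) :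
    -- around every point there is a coordinate system `(x,y)` adapted to
    -- `D₁ = ker χ₁(L)`, `D₂ = ker χ₂(L)`, in which `L = diag(L₁(x), L₂(y))` …
    (∀ p ∈ U, ∃ W : Set (Fin n → ℝ), IsOpen W ∧ p ∈ W ∧ W ⊆ U ∧
      ∃ (W' : Set (Fin n → ℝ)) (Φ Ψ : (Fin n → ℝ) → Fin n → ℝ),
        IsOpen W' ∧ ContDiffOn ℝ (⊤ : ℕ∞) Φ W ∧ ContDiffOn ℝ (⊤ : ℕ∞) Ψ W' ∧
        Φ '' W = W' ∧ (∀ x ∈ W, Ψ (Φ x) = x) ∧ (∀ z ∈ W', Φ (Ψ z) = z) ∧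
        -- `LT` is the coordinate representation of `L` in the new coordinates
        (∀ LT : (Fin n → ℝ) → Matrix (Fin n) (Fin n) ℝ,
          (∀ z ∈ W', LT z = jac Φ (Ψ z) * L (Ψ z) * jac Ψ z) →
          ∀ z ∈ W',
            -- the coordinate vector fields `∂_{x^i}` generate `D₁` and the
            -- `∂_{y^j}` generate `D₂`
            (LinearMap.ker (Matrix.mulVecLin (aeval (LT z) (chi1 (Ψ z))))
                = coordSpan n r) ∧
            (LinearMap.ker (Matrix.mulVecLin (aeval (LT z) (chi2 (Ψ z))))
                = coordSpan' n r) ∧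
            -- `L` is block-diagonal in the new coordinates
            (∀ i j : Fin n, (((i : ℕ) < r ∧ r ≤ (j : ℕ)) ∨ (r ≤ (i : ℕ) ∧ (j : ℕ) < r)) →
              LT z i j = 0) ∧
            -- the entries of `L₁` depend only on `x` …
            (∀ i j : Fin n, (i : ℕ) < r → (j : ℕ) < r →
              ∀ m : Fin n, r ≤ (m : ℕ) → pd m (fun w => LT w i j) z = 0) ∧
            -- … and those of `L₂` only on `y`
            (∀ i j : Fin n, r ≤ (i : ℕ) → r ≤ (j : ℕ) →
              ∀ m : Fin n, (m : ℕ) < r → pd m (fun w => LT w i j) z = 0))) ∧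
    -- in particular, the distributions `D₁` and `D₂` are integrable
    IsIntegrableDist U (Dker L chi1) ∧ IsIntegrableDist U (Dker L chi2) := by
  refine ⟨fun p hp => ?_, hfac.isIntegrableDist_Dker hU hLsmooth hNL,
    hfac.symm.isIntegrableDist_Dker hU hLsmooth hNL⟩
  obtain ⟨e, hpe, heU, he⟩ := hfac.exists_isAdaptedChart hU hLsmooth hNL hp
    ((card_fin_val_lt hr).trans (hdeg p hp).symm)
  have hecompl := he.compl
  rw [← coordProj_not] at hecompl
  refine ⟨e.source, e.open_source, hpe, heU, e.target, e, e.symm, e.open_target, he.contDiffOn,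
    he.contDiffOn_symm, e.image_source_eq_target, fun x hx => e.left_inv hx,
    fun z hz => e.right_inv hz, fun LT hLT z hz => ?_⟩
  have hL : ∀ i j, ContDiffOn ℝ ∞ (fun x => L x i j) e.source := fun i j => (hLsmooth i j).mono heU
  have hspec := fun x hx => hfac.isSpectralProj (x := x) (heU hx)
  have hLT₁ := he.isSpectralProj_pushforward (L := fun x => mulVecCLM (L x)) hz
    (hspec _ (e.map_target hz))
  rw [← he.mulVecCLM_eq_pushforward hLT hz] at hLT₁
  have hLT₂ := hLT₁.compl
  rw [← coordProj_not] at hLT₂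
  refine ⟨hLT₁.ker_mulVecLin_aeval,
    hLT₂.ker_mulVecLin_aeval.trans (coordSpan'_eq_span_not n r).symm, ?_,
    fun i j _ hj m hm => he.pd_eq_zero hL (hNL.mono heU) hLT hspec hz hj hm.not_gt i,
    fun i j _ hj m hm => hecompl.pd_eq_zero hL (hNL.mono heU) hLT (fun x hx => (hspec x hx).compl)
      hz hj.not_gt (not_not_intro hm) i⟩
  rintro i j (⟨hi, hj⟩ | ⟨hi, hj⟩)
  · exact hLT₁.matrix_apply_eq_zero hi hj.not_gt
  · exact hLT₂.matrix_apply_eq_zero hi.not_gt (not_not_intro hj)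
end
end
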